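/- arXiv:2406.00686 — 10 statements merged into one kernel-verified Lean document; each statement's English description precedes it below -/
import Mathlib

section
/- Let a be a real number with a ∉ {−1, 0, 1}, and let p(x) = (x² + a²)(x + a²)(x − 1). Then the polynomial H_{3/4}[p] = (3/4)·(p')² − p·p'' has exactly 4 real roots counted with multiplicity, while p has exactly 2 non-real complex roots counted with multiplicity; in particular Z_ℝ(H_{3/4}[p]) = 4 > 2 = Z_ℂ(p). -/
/-!
With `b = a²` and `s = b - 1` one has `p = x⁴ + s x³ + b s x - b²`, and for `κ = 3/4` the two leading
terms of `H_κ[p]` cancel, leaving a perfect square: `H_{3/4}[p] = (3/4) (s x² - 4 b x - b s)²`.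
Since `s ≠ 0` and `b > 0`, the quadratic has discriminant `4 (4 b² + b s²) > 0`, hence two real roots
`r₁, r₂`, and `H_{3/4}[p]` is a nonzero constant times `(x - r₁)² (x - r₂)²`.
The roots of `p` over `ℂ` are `± a i`, `-a²` and `1`.
-/

open Polynomial

/-- `Hk κ p = κ·(p')² − p·p''`. -/
noncomputable def Hk (κ : ℝ) (p : ℝ[X]) : ℝ[X] :=
  C κ * (derivative p) ^ 2 - p * derivative (derivative p)

/-- `Zreal q` : number of real roots of `q` counted with multiplicity. -/
noncomputable def Zreal (q : ℝ[X]) : ℕ := Multiset.card q.roots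

/-- `Zcomplex q` : number of non-real complex roots of `q` counted with multiplicity. -/
noncomputable def Zcomplex (q : ℝ[X]) : ℕ :=
  Multiset.card ((q.map (algebraMap ℝ ℂ)).roots.filter (fun z => z.im ≠ 0))

/-- Number of real zeros of `Q_κ[p] = H_κ[p]/(p')²` counted with multiplicity. -/
noncomputable def ZQ (κ : ℝ) (p : ℝ[X]) : ℕ :=
  ∑ᶠ x : ℝ, (rootMultiplicity x (Hk κ p) - 2 * rootMultiplicity x (derivative p))

open scoped Classical in
/-- `ZIcount I q` : number of roots of `q` in the set `I` counted with multiplicity. -/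
noncomputable def ZIcount (I : Set ℝ) (q : ℝ[X]) : ℕ :=
  Multiset.card (q.roots.filter (fun x => x ∈ I))

/-- `Zdist q` : number of distinct real roots of `q`. -/
noncomputable def Zdist (q : ℝ[X]) : ℕ := q.roots.toFinset.card

lemma Hk_eq_sq (b : ℝ) :
    Hk (3 / 4) ((X ^ 2 + C b) * (X + C b) * (X - 1)) =
      C (3 / 4) * (C (b - 1) * X ^ 2 - C (4 * b) * X - C (b * (b - 1))) ^ 2 := by
  refine Polynomial.funext fun x => ?_
  simp [Hk]
  ring

lemma Zreal_Hk (b : ℝ) (hb : 0 < b) (hb1 : b - 1 ≠ 0) :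
    Zreal (Hk (3 / 4) ((X ^ 2 + C b) * (X + C b) * (X - 1))) = 4 := by
  obtain ⟨d, hd⟩ : ∃ d : ℝ, d ^ 2 = 4 * b ^ 2 + b * (b - 1) ^ 2 :=
    ⟨√(4 * b ^ 2 + b * (b - 1) ^ 2), Real.sq_sqrt (by positivity)⟩
  have hfac : C (3 / 4) * (C (b - 1) * X ^ 2 - C (4 * b) * X - C (b * (b - 1))) ^ 2 =
      C (3 / 4 * (b - 1) ^ 2) *
        (({(2 * b + d) / (b - 1), (2 * b + d) / (b - 1), (2 * b - d) / (b - 1),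
          (2 * b - d) / (b - 1)} : Multiset ℝ).map (fun r => X - C r)).prod := by
    refine Polynomial.funext fun x => ?_
    have hq : (b - 1) * x ^ 2 - 4 * b * x - b * (b - 1) =
        (b - 1) * ((x - (2 * b + d) / (b - 1)) * (x - (2 * b - d) / (b - 1))) := by
      field_simp
      linear_combination hd
    simp only [Multiset.insert_eq_cons, Multiset.map_cons, Multiset.map_singleton,
      Multiset.prod_cons, Multiset.prod_singleton, eval_mul, eval_sub, eval_pow, eval_C, eval_X]
    rw [hq]
    ring
  rw [Hk_eq_sq, hfac, Zreal, roots_C_mul _ (by positivity), roots_multiset_prod_X_sub_C]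
  simp

lemma Zcomplex_p (a : ℝ) (ha : a ≠ 0) :
    Zcomplex ((X ^ 2 + C (a ^ 2)) * (X + C (a ^ 2)) * (X - 1)) = 2 := by
  have hfac : ((X ^ 2 + C (a ^ 2)) * (X + C (a ^ 2)) * (X - 1) : ℝ[X]).map (algebraMap ℝ ℂ) =
      (({a * Complex.I, -(a * Complex.I), ((-a ^ 2 : ℝ) : ℂ), 1} : Multiset ℂ).map
        (fun r => X - C r)).prod := by
    refine Polynomial.funext fun x => ?_
    simp
    linear_combination ((x + a ^ 2) * (x - 1) * a ^ 2) * Complex.I_sq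
  rw [Zcomplex, hfac, roots_multiset_prod_X_sub_C]
  simp only [Multiset.insert_eq_cons, ← Multiset.cons_zero]
  rw [Multiset.filter_cons_of_pos _ (by simpa using ha),
    Multiset.filter_cons_of_pos _ (by simpa using ha),
    Multiset.filter_cons_of_neg _ (by rw [Complex.ofReal_im]; simp),
    Multiset.filter_cons_of_neg _ (by simp)]
  simp

theorem stmt0 (a : ℝ) (ha : a ∉ ({-1, 0, 1} : Set ℝ))
    (p : ℝ[X]) (hp : p = (X ^ 2 + C (a ^ 2)) * (X + C (a ^ 2)) * (X - 1)) :
    Zreal (Hk (3 / 4) p) = 4 ∧ Zcomplex p = 2 := by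
  simp only [Set.mem_insert_iff, Set.mem_singleton_iff, not_or] at ha
  obtain ⟨h1, h0, h2⟩ := ha
  subst hp
  refine ⟨Zreal_Hk _ (by positivity) fun h => ?_, Zcomplex_p a h0⟩
  rcases eq_or_eq_neg_of_sq_eq_sq a 1 (by rw [one_pow]; exact sub_eq_zero.mp h) with h | h
  exacts [h2 h, h1 h]
end

section
/- Let n ≥ 5 be an integer and p(x) = (x − 1)ⁿ + (x + 1)ⁿ. Then the polynomial H_{(n−1)/n}[p] = ((n−1)/n)·(p')² − p·p'' has exactly 2n − 4 real roots counted with multiplicity, p has exactly 2·⌊n/2⌋ non-real complex roots counted with multiplicity, and 2·⌊n/2⌋ < 2n − 4. -/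
/-!
Put `a = X - 1`, `b = X + 1`. Since `((n-1)/n)·n² = n(n-1)`, expanding `H` gives
`n(n-1)·((aⁿ⁻¹ + bⁿ⁻¹)² - (aⁿ + bⁿ)(aⁿ⁻² + bⁿ⁻²)) = -n(n-1)·(a - b)²·(a b)ⁿ⁻²`,
which is a nonzero constant times `(a b)ⁿ⁻²` (`Hk_eq`) and so has `2(n-2)` real roots.

Over `ℂ`, `p` has degree `n` and simple roots: a common root of `p` and `p'` would satisfy
`aⁿ = -bⁿ` and `aⁿ⁻¹ = -bⁿ⁻¹`, forcing `a = b` or `a = b = 0`. Every root `z` has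
`|z - 1| = |z + 1|`, hence is purely imaginary, so the only possible real root is `0`, and it is
a root exactly when `n` is odd.
-/

open Polynomial

lemma Hk_eq (m : ℕ) :
    Hk ((((m + 2 : ℕ) : ℝ) - 1) / (m + 2 : ℕ)) ((X - 1) ^ (m + 2) + (X + 1) ^ (m + 2)) =
      C (-4 * ((m : ℝ) + 2) * (m + 1)) * ((X - C 1) ^ m * (X - C (-1)) ^ m) := by
  have hm : (m : ℝ) + 2 ≠ 0 := by positivity
  have hκ : ((((m + 2 : ℕ) : ℝ) - 1) / (m + 2 : ℕ)) * ((m : ℝ) + 2) ^ 2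
      = ((m : ℝ) + 2) * (m + 1) := by
    push_cast
    field_simp
    ring
  have hκ' := congrArg (C : ℝ → ℝ[X]) hκ
  unfold Hk
  generalize ((((m + 2 : ℕ) : ℝ) - 1) / (m + 2 : ℕ)) = κ at hκ'
  have hd : derivative ((X - 1 : ℝ[X]) ^ (m + 2) + (X + 1) ^ (m + 2)) =
      (C ((m : ℝ) + 2)) * ((X - 1) ^ (m + 1) + (X + 1) ^ (m + 1)) := by
    simp [derivative_pow]
    ring
  have hdd : derivative ((C ((m : ℝ) + 2)) * ((X - 1) ^ (m + 1) + (X + 1) ^ (m + 1))) =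
      (C (((m : ℝ) + 2) * (m + 1))) * ((X - 1) ^ m + (X + 1) ^ m) := by
    simp [derivative_pow]
    ring
  rw [hd, hdd]
  simp only [map_mul, map_add, map_pow, map_neg, map_one] at hκ' ⊢
  have h4 : (C (4 : ℝ)) = (4 : ℝ[X]) := rfl
  rw [h4]
  linear_combination ((X - 1) ^ (m + 1) + (X + 1 : ℝ[X]) ^ (m + 1)) ^ 2 * hκ'

lemma re_eq_zero_of_root {n : ℕ} (hn : n ≠ 0) {z : ℂ} (h : (z - 1) ^ n + (z + 1) ^ n = 0) :
    z.re = 0 := by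
  have h1 : ‖z - 1‖ ^ n = ‖z + 1‖ ^ n := by
    rw [← norm_pow, ← norm_pow, eq_neg_of_add_eq_zero_left h, norm_neg]
  have h2 : ‖z - 1‖ = ‖z + 1‖ :=
    (pow_left_inj₀ (norm_nonneg _) (norm_nonneg _) hn).1 h1
  have h3 : Complex.normSq (z - 1) = Complex.normSq (z + 1) := by
    rw [Complex.normSq_eq_norm_sq, Complex.normSq_eq_norm_sq, h2]
  simp only [Complex.normSq_apply, Complex.sub_re, Complex.sub_im, Complex.add_re,
    Complex.add_im, Complex.one_re, Complex.one_im] at h3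
  linarith

lemma natDegree_sum (n : ℕ) : ((X - 1 : ℂ[X]) ^ n + (X + 1) ^ n).natDegree = n := by
  have e1 : (X - 1 : ℂ[X]) = X - C 1 := by simp
  have e2 : (X + 1 : ℂ[X]) = X + C 1 := by simp
  have d1 : ((X - 1 : ℂ[X]) ^ n).natDegree = n := by
    rw [e1, natDegree_pow, natDegree_X_sub_C, mul_one]
  have d2 : ((X + 1 : ℂ[X]) ^ n).natDegree = n := by
    rw [e2, natDegree_pow, natDegree_X_add_C, mul_one]
  have c1 : ((X - 1 : ℂ[X]) ^ n).coeff n = 1 := by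
    have := ((monic_X_sub_C (1 : ℂ)).pow n).coeff_natDegree
    rwa [← e1, d1] at this
  have c2 : ((X + 1 : ℂ[X]) ^ n).coeff n = 1 := by
    have := ((monic_X_add_C (1 : ℂ)).pow n).coeff_natDegree
    rwa [← e2, d2] at this
  apply natDegree_eq_of_le_of_coeff_ne_zero
  · exact natDegree_add_le_of_degree_le d1.le d2.le
  · rw [coeff_add, c1, c2]
    norm_num

lemma rootMultiplicity_sum_le_one (m : ℕ) (z : ℂ) :
    ((X - 1 : ℂ[X]) ^ (m + 2) + (X + 1) ^ (m + 2)).rootMultiplicity z ≤ 1 := by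
  have h0 : (X - 1 : ℂ[X]) ^ (m + 2) + (X + 1) ^ (m + 2) ≠ 0 := by
    intro h
    have := natDegree_sum (m + 2)
    simp [h] at this
  by_contra! hlt
  obtain ⟨hr, hd⟩ := (one_lt_rootMultiplicity_iff_isRoot h0).1 hlt
  have hm : ((m : ℂ) + 2) ≠ 0 := by exact_mod_cast (by omega : m + 2 ≠ 0)
  have hr' : (z - 1) ^ (m + 2) + (z + 1) ^ (m + 2) = 0 := by simpa using hr
  have hd' : (z - 1) ^ (m + 1) + (z + 1) ^ (m + 1) = 0 := by
    have : ((m : ℂ) + 2) * ((z - 1) ^ (m + 1) + (z + 1) ^ (m + 1)) = 0 := by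
      simp [IsRoot.def, derivative_pow] at hd
      linear_combination hd
    exact (mul_eq_zero.1 this).resolve_left hm
  have ha : (z - 1) ^ (m + 1) = 0 := by linear_combination ((z + 1) * hd' - hr') / 2
  have hb : (z + 1) ^ (m + 1) = 0 := by linear_combination hd' - ha
  have ha' := pow_eq_zero_iff (by omega) |>.1 ha
  have hb' := pow_eq_zero_iff (by omega) |>.1 hb
  have : (2 : ℂ) = 0 := by linear_combination hb' - ha'
  norm_num at this

lemma rootMultiplicity_zero_sum (m : ℕ) :
    ((X - 1 : ℂ[X]) ^ (m + 2) + (X + 1) ^ (m + 2)).rootMultiplicity 0 = (m + 2) % 2 := by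
  have h0 : (X - 1 : ℂ[X]) ^ (m + 2) + (X + 1) ^ (m + 2) ≠ 0 := by
    intro h
    have := natDegree_sum (m + 2)
    simp [h] at this
  have hle := rootMultiplicity_sum_le_one m 0
  rcases Nat.even_or_odd (m + 2) with h | h
  · rw [Nat.even_iff.1 h]
    apply rootMultiplicity_eq_zero
    simp only [IsRoot.def, eval_add, eval_pow, eval_sub, eval_X, eval_one, zero_sub, zero_add,
      one_pow, h.neg_one_pow]
    norm_num
  · rw [Nat.odd_iff.1 h]
    refine le_antisymm hle ((rootMultiplicity_pos h0).2 ?_)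
    simp [IsRoot.def, h.neg_one_pow]

theorem stmt1 (n : ℕ) (hn : 5 ≤ n)
    (p : ℝ[X]) (hp : p = (X - 1) ^ n + (X + 1) ^ n) :
    Zreal (Hk (((n : ℝ) - 1) / n) p) = 2 * n - 4 ∧
    Zcomplex p = 2 * (n / 2) ∧ 2 * (n / 2) < 2 * n - 4 := by
  obtain ⟨m, rfl⟩ : ∃ m, n = m + 2 := ⟨n - 2, by omega⟩
  subst hp
  refine ⟨?_, ?_, by omega⟩
  · have hc : -4 * ((m : ℝ) + 2) * (m + 1) ≠ 0 := by
      have : 0 < ((m : ℝ) + 2) * (m + 1) := by positivity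
      intro h
      linarith
    rw [Zreal, Hk_eq, roots_C_mul _ hc, roots_mul
      (mul_ne_zero (pow_ne_zero _ (X_sub_C_ne_zero _)) (pow_ne_zero _ (X_sub_C_ne_zero _))),
      roots_pow, roots_pow, roots_X_sub_C, roots_X_sub_C]
    simp
    omega
  · have hmap : ((X - 1 : ℝ[X]) ^ (m + 2) + (X + 1) ^ (m + 2)).map (algebraMap ℝ ℂ) =
        (X - 1) ^ (m + 2) + (X + 1) ^ (m + 2) := by
      simp
    rw [Zcomplex, hmap]
    have hz := rootMultiplicity_zero_sum m
    have hcard : Multiset.card ((X - 1 : ℂ[X]) ^ (m + 2) + (X + 1) ^ (m + 2)).roots = m + 2 := by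
      rw [← (IsAlgClosed.splits _).natDegree_eq_card_roots, natDegree_sum]
    -- The roots on the real axis are exactly the copies of `0`.
    have hreal : ((X - 1 : ℂ[X]) ^ (m + 2) + (X + 1) ^ (m + 2)).roots.filter
          (fun z => ¬ z.im ≠ 0) =
        ((X - 1 : ℂ[X]) ^ (m + 2) + (X + 1) ^ (m + 2)).roots.filter (fun z => z = 0) := by
      apply Multiset.filter_congr
      intro z hzr
      have hre := re_eq_zero_of_root (n := m + 2) (z := z) (by omega)
        (by simpa using isRoot_of_mem_roots hzr)
      simp [Complex.ext_iff, hre]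
    have hsplit := congrArg Multiset.card (Multiset.filter_add_not (fun z : ℂ => z.im ≠ 0)
      ((X - 1 : ℂ[X]) ^ (m + 2) + (X + 1) ^ (m + 2)).roots)
    rw [Multiset.card_add, hreal, Multiset.filter_eq', Multiset.card_replicate, count_roots, hz,
      hcard] at hsplit
    omega
end

section
/- Let n ≥ 2, let p be a real polynomial of degree n such that every real zero of p is simple and the derivative p' has n − 1 distinct real zeros (i.e., all zeros of p' are real and simple), and let κ ≤ 0. Then Z_ℝ(H_κ[p]) = n + Z_ℝ(p) − 2, i.e., the number of real roots of H_κ[p] counted with multiplicity equals n plus the number of real roots of p minus 2. -/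
/-!
The engine is a sign identity (`sum_sign_derivative`): a real polynomial `q` of odd degree with
positive leading coefficient, all of whose real zeros are simple, satisfies
`∑ sign q'(x) = 1`, the sum running over its real zeros, because the signs alternate and the last
one is `+1`.

Applied to `q = p p'` it gives `Z(p) + ∑_c sign (p(c) p''(c)) = 1`, where `c` runs over the
critical points of `p`.

For `κ < 0` it is applied to `q = -H p' p''`. Laguerre's inequality `p''² - p' p''' > 0`, valid
because `p'` has only real, simple zeros, forces the signs: a zero of `H` contributes `+1`
(in particular it is simple), a zero of `p''` contributes `-1`, and a critical point `c`
contributes `sign (p(c) p''(c))`. Hence `Z(H) - (n - 2) + ∑_c sign (p(c) p''(c)) = 1`,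
and subtracting the two identities yields `Z(H) = n + Z(p) - 2`.

For `κ = 0`, `H = -p p''` and by Rolle's theorem `p''` has exactly `n - 2` real zeros.
-/

open Polynomial

/-- A real polynomial without real zeros and with positive leading coefficient is positive. -/
lemma eval_pos_of_no_root (g : ℝ[X]) (hg : ∀ x, ¬ g.IsRoot x) (hl : 0 < g.leadingCoeff) (x : ℝ) :
    0 < g.eval x := by
  by_contra hx
  have hx' : g.eval x < 0 := lt_of_le_of_ne (not_lt.mp hx) (hg x)
  by_cases hd : 0 < g.degree
  · have ht := tendsto_atTop_of_leadingCoeff_nonneg g hd hl.le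
    obtain ⟨y, hy, hxy⟩ := ((ht.eventually_gt_atTop 0).and (Filter.eventually_ge_atTop x)).exists
    obtain ⟨z, -, hz⟩ := intermediate_value_Icc hxy g.continuous.continuousOn
      (show (0 : ℝ) ∈ Set.Icc _ _ from ⟨hx'.le, hy.le⟩)
    exact hg z hz
  · rw [eq_C_of_degree_le_zero (not_lt.mp hd)] at hl hx'
    simp at hl hx'
    linarith

lemma even_natDegree_of_no_root (g : ℝ[X]) (hg : ∀ x, ¬ g.IsRoot x) (hl : 0 < g.leadingCoeff) :
    Even g.natDegree := by
  by_contra ho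
  rw [Nat.not_even_iff_odd] at ho
  -- if the degree were odd, `-g(-X)` would be positive as well
  have h := eval_pos_of_no_root (-(g.comp (-X))) (fun x hx => hg (-x) (by simpa using hx))
    (by rw [leadingCoeff_neg, leadingCoeff_comp (by simp)]; simpa [ho.neg_one_pow] using hl) 0
  have := eval_pos_of_no_root g hg hl 0
  simp at h
  linarith

/-- The signs of `∏ (X - s)` differentiated at its zeros alternate, the last one being `+1`. -/
lemma sum_sign_prod (S : Finset ℝ) :
    ∑ r ∈ S, ((SignType.sign (∏ s ∈ S.erase r, (r - s)) : SignType) : ℤ) =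
      if Odd S.card then 1 else 0 := by
  induction S using Finset.induction_on_max with
  | empty => simp
  | insert M S hM ih =>
    have hMS : M ∉ S := fun h => lt_irrefl _ (hM M h)
    rw [Finset.sum_insert hMS, Finset.erase_insert hMS, Finset.card_insert_of_notMem hMS,
      sign_pos (Finset.prod_pos fun s hs => sub_pos.2 (hM s hs))]
    have : ∀ r ∈ S, ((SignType.sign (∏ s ∈ (insert M S).erase r, (r - s)) : SignType) : ℤ) =
        -((SignType.sign (∏ s ∈ S.erase r, (r - s)) : SignType) : ℤ) := by
      intro r hr
      rw [Finset.erase_insert_of_ne (hM r hr).ne', Finset.prod_insert (by simp [hMS]), sign_mul,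
        sign_neg (sub_neg.2 (hM r hr))]
      simp
    rw [Finset.sum_congr rfl this, Finset.sum_neg_distrib, ih]
    by_cases h : Odd S.card <;> simp [h, Nat.odd_add_one, -Nat.not_odd_iff_even]

lemma roots_nodup_of_simple {q : ℝ[X]} (h0 : q ≠ 0)
    (hs : ∀ x, q.IsRoot x → (derivative q).eval x ≠ 0) : q.roots.Nodup := by
  rw [Multiset.nodup_iff_count_le_one]
  intro x
  rw [count_roots]
  by_contra h
  obtain ⟨h1, h2⟩ := (one_lt_rootMultiplicity_iff_isRoot h0).1 (not_le.1 h)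
  exact hs x h1 h2

lemma toFinset_val_roots {q : ℝ[X]} (hn : q.roots.Nodup) : q.roots.toFinset.val = q.roots := by
  rw [Multiset.toFinset_val, hn.dedup]

/-- The signs of `q'` at the (simple) real zeros of a polynomial `q` with odd degree and positive
leading coefficient add up to `1`: writing `q = ∏ (X - s) * g` with `g` free of real zeros, `g` is
positive, so only the product matters. -/
lemma sum_sign_derivative (q : ℝ[X]) (hodd : Odd q.natDegree) (hl : 0 < q.leadingCoeff)
    (hs : ∀ x, q.IsRoot x → (derivative q).eval x ≠ 0) :
    ∑ x ∈ q.roots.toFinset, ((SignType.sign ((derivative q).eval x) : SignType) : ℤ) = 1 := by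
  have h0 : q ≠ 0 := by rintro rfl; simp at hl
  have hn := toFinset_val_roots (roots_nodup_of_simple h0 hs)
  obtain ⟨g, hg, hd, hr⟩ := exists_prod_multiset_X_sub_C_mul q
  set S := q.roots.toFinset with hS
  rw [← hn] at hg hd
  change (∏ s ∈ S, (X - C s)) * g = q at hg
  change S.card + _ = _ at hd
  have hg0 : g ≠ 0 := by rintro rfl; simp at hg; exact h0 hg.symm
  have hgr : ∀ x, ¬ g.IsRoot x := fun x hx => by
    have := (mem_roots hg0).2 hx
    simp [hr] at this
  have hgl : 0 < g.leadingCoeff := by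
    rw [← hg, leadingCoeff_mul, (monic_prod_X_sub_C _ S).leadingCoeff, one_mul] at hl
    exact hl
  have hSodd : Odd S.card := by
    have he := even_natDegree_of_no_root g hgr hgl
    rw [← hd] at hodd
    rcases Nat.even_or_odd S.card with h | h
    · exact absurd hodd (Nat.not_odd_iff_even.2 (h.add he))
    · exact h
  have := sum_sign_prod S
  rw [if_pos hSodd] at this
  rw [← this]
  refine Finset.sum_congr rfl fun r hrS => ?_
  rw [← hg, ← Finset.mul_prod_erase S _ hrS, mul_assoc, derivative_mul]
  simp only [derivative_X_sub_C, one_mul, eval_add, eval_mul, eval_sub, eval_X, eval_C, sub_self,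
    zero_mul, add_zero, sign_mul, sign_pos (eval_pos_of_no_root g hgr hgl r), mul_one, eval_prod]

/-- Laguerre's inequality for monic polynomials with simple real zeros. The weak form is carried
along in the induction because the empty product is only covered by it; the step rests on
`L((X - c) t) = t² + (X - c)² L(t)` for `L(r) = r'² - r r''`. -/
lemma laguerre_prod (S : Finset ℝ) (x : ℝ) :
    let r : ℝ[X] := ∏ s ∈ S, (X - C s)
    0 ≤ (derivative r).eval x ^ 2 - r.eval x * (derivative (derivative r)).eval x ∧
    (S.Nonempty →
      0 < (derivative r).eval x ^ 2 - r.eval x * (derivative (derivative r)).eval x) := by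
  induction S using Finset.induction_on with
  | empty => simp
  | insert c S hc ih =>
    intro r
    set t : ℝ[X] := ∏ s ∈ S, (X - C s) with ht
    obtain ⟨h1, h2⟩ := ih
    have hr : r = (X - C c) * t := Finset.prod_insert hc
    have key : (derivative r).eval x ^ 2 - r.eval x * (derivative (derivative r)).eval x =
        t.eval x ^ 2 + (x - c) ^ 2 *
          ((derivative t).eval x ^ 2 - t.eval x * (derivative (derivative t)).eval x) := by
      rw [hr]; simp; ring
    have hpos : 0 <
        (derivative r).eval x ^ 2 - r.eval x * (derivative (derivative r)).eval x := by
      rw [key]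
      by_cases h : t.eval x = 0
      · have hxS : x ∈ S := by
          rw [ht, eval_prod, Finset.prod_eq_zero_iff] at h
          obtain ⟨s, hs, hxs⟩ := h
          simp [sub_eq_zero] at hxs
          rwa [hxs]
        have hxc : x - c ≠ 0 := sub_ne_zero.2 fun h => hc (h ▸ hxS)
        have := h2 ⟨x, hxS⟩
        positivity
      · have := mul_nonneg (sq_nonneg (x - c)) h1
        have : 0 < t.eval x ^ 2 := by positivity
        linarith
    exact ⟨hpos.le, fun _ => hpos⟩

/-- Strict Laguerre inequality for a nonconstant polynomial with only real, simple zeros. -/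
lemma laguerre (r : ℝ[X]) (hr : r.roots.toFinset.card = r.natDegree) (hd : 0 < r.natDegree)
    (x : ℝ) :
    0 < (derivative r).eval x ^ 2 - r.eval x * (derivative (derivative r)).eval x := by
  have hcard : Multiset.card r.roots = r.natDegree :=
    le_antisymm (card_roots' r) (hr ▸ Multiset.toFinset_card_le _)
  have hnd : r.roots.Nodup := Multiset.toFinset_card_eq_card_iff_nodup.1 (hr.trans hcard.symm)
  have hn := toFinset_val_roots hnd
  have h := C_leadingCoeff_mul_prod_multiset_X_sub_C hcard
  rw [← hn] at h
  change C r.leadingCoeff * (∏ s ∈ r.roots.toFinset, (X - C s)) = r at h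
  have hl := (laguerre_prod r.roots.toFinset x).2 (Finset.card_pos.1 (hr ▸ hd))
  have ha : r.leadingCoeff ≠ 0 := leadingCoeff_ne_zero.2 (by rintro rfl; simp at hd)
  generalize r.leadingCoeff = a at h ha
  generalize (∏ s ∈ r.roots.toFinset, (X - C s) : ℝ[X]) = t at h hl
  rw [← h]
  simp only [derivative_C_mul, eval_mul, eval_C]
  have := mul_pos (pow_pos (abs_pos.2 ha) 2) hl
  rw [sq_abs] at this
  linarith

/-- A sum over the distinct real zeros of `f g` splits when `f` and `g` have no common zero. -/
lemma sum_roots_mul {f g : ℝ[X]} (h0 : f * g ≠ 0) (hfg : ∀ x, f.IsRoot x → ¬ g.IsRoot x)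
    (F : ℝ → ℤ) :
    ∑ x ∈ (f * g).roots.toFinset, F x =
      ∑ x ∈ f.roots.toFinset, F x + ∑ x ∈ g.roots.toFinset, F x := by
  rw [roots_mul h0, Multiset.toFinset_add, Finset.sum_union]
  rw [Finset.disjoint_left]
  intro x hx hy
  simp only [Multiset.mem_toFinset] at hx hy
  exact hfg x (isRoot_of_mem_roots hx) (isRoot_of_mem_roots hy)

/-- For `κ < 0` the leading terms of the two summands `-κ p'²` and `p p''` of `-H` are both positive
and of the same degree, so they cannot cancel. -/
lemma degree_neg_Hk {p : ℝ[X]} (hn : 2 ≤ p.natDegree) {κ : ℝ} (hκ : κ < 0) :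
    (-Hk κ p).natDegree = 2 * p.natDegree - 2 ∧ 0 < (-Hk κ p).leadingCoeff := by
  have hp0 : p ≠ 0 := by rintro rfl; simp at hn
  have hl : p.leadingCoeff ≠ 0 := leadingCoeff_ne_zero.2 hp0
  have h2 : (2 : ℝ) ≤ p.natDegree := by exact_mod_cast hn
  have e1 : (derivative p).natDegree = p.natDegree - 1 := natDegree_derivative p
  have e2 : (derivative (derivative p)).natDegree = p.natDegree - 2 := by
    rw [natDegree_derivative, e1]; omega
  have hp1 : derivative p ≠ 0 := by
    intro h; rw [h] at e1; simp at e1; omega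
  have l1 : (derivative p).leadingCoeff = p.leadingCoeff * p.natDegree := by
    rw [leadingCoeff_derivative]
  have l2 : (derivative (derivative p)).leadingCoeff =
      p.leadingCoeff * p.natDegree * (p.natDegree - 1) := by
    rw [leadingCoeff_derivative, l1, e1, Nat.cast_sub (by omega)]; simp
  have hp2 : derivative (derivative p) ≠ 0 := by
    rw [← leadingCoeff_ne_zero, l2]
    exact mul_ne_zero (mul_ne_zero hl (by linarith)) (by linarith)
  have eq : -Hk κ p = C (-κ) * derivative p ^ 2 + p * derivative (derivative p) := by
    simp [Hk]; ring
  have hA0 : C (-κ) * derivative p ^ 2 ≠ 0 :=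
    mul_ne_zero (C_ne_zero.2 (by linarith)) (pow_ne_zero _ hp1)
  have hB0 := mul_ne_zero hp0 hp2
  have dA : (C (-κ) * derivative p ^ 2).natDegree = 2 * p.natDegree - 2 := by
    rw [natDegree_C_mul (by linarith), natDegree_pow, e1]; omega
  have dB : (p * derivative (derivative p)).natDegree = 2 * p.natDegree - 2 := by
    rw [natDegree_mul hp0 hp2, e2]; omega
  have lA : 0 < (C (-κ) * derivative p ^ 2).leadingCoeff := by
    rw [leadingCoeff_mul, leadingCoeff_C, leadingCoeff_pow, l1]
    have : 0 < -κ := by linarith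
    positivity
  have lB : 0 < (p * derivative (derivative p)).leadingCoeff := by
    rw [leadingCoeff_mul, l2]
    have : 0 < (p.natDegree : ℝ) - 1 := by linarith
    have : 0 < p.leadingCoeff ^ 2 * p.natDegree * ((p.natDegree : ℝ) - 1) := by positivity
    linarith
  have hd : (C (-κ) * derivative p ^ 2).degree = (p * derivative (derivative p)).degree := by
    rw [degree_eq_natDegree hA0, degree_eq_natDegree hB0, dA, dB]
  have hne : (C (-κ) * derivative p ^ 2).leadingCoeff +
      (p * derivative (derivative p)).leadingCoeff ≠ 0 := by linarith
  rw [eq]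
  constructor
  · rw [← dB]
    apply natDegree_eq_of_degree_eq
    rw [degree_add_eq_of_leadingCoeff_add_ne_zero hne, hd, max_self]
  · rw [leadingCoeff_add_of_degree_eq hd hne]
    linarith

theorem stmt3 (n : ℕ) (hn : 2 ≤ n) (p : ℝ[X]) (hdeg : p.natDegree = n)
    (hsimple : ∀ x : ℝ, p.IsRoot x → rootMultiplicity x p = 1)
    (hder : (derivative p).roots.toFinset.card = n - 1)
    (κ : ℝ) (hκ : κ ≤ 0) :
    Zreal (Hk κ p) = n + Zreal p - 2 := by
  have hp0 : p ≠ 0 := by rintro rfl; simp at hdeg; omega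
  have e1 : (derivative p).natDegree = n - 1 := by rw [natDegree_derivative, hdeg]
  have e2 : (derivative (derivative p)).natDegree = n - 2 := by
    rw [natDegree_derivative, e1]; omega
  have lag := laguerre (derivative p) (by rw [hder, e1]) (by omega)
  have hl0 : p.leadingCoeff ≠ 0 := leadingCoeff_ne_zero.2 hp0
  have hnR : (2 : ℝ) ≤ n := by exact_mod_cast hn
  have l1 : (derivative p).leadingCoeff = p.leadingCoeff * n := by
    rw [leadingCoeff_derivative, hdeg]
  have l2 : (derivative (derivative p)).leadingCoeff = p.leadingCoeff * n * (n - 1) := by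
    rw [leadingCoeff_derivative, l1, e1, Nat.cast_sub (by omega)]; simp
  have hp1 : derivative p ≠ 0 := by
    rw [← leadingCoeff_ne_zero, l1]
    exact mul_ne_zero hl0 (by linarith)
  have hp2 : derivative (derivative p) ≠ 0 := by
    rw [← leadingCoeff_ne_zero, l2]
    exact mul_ne_zero (mul_ne_zero hl0 (by linarith)) (by linarith)
  have s0 : ∀ x, p.IsRoot x → (derivative p).eval x ≠ 0 := fun x hx h => by
    have := (one_lt_rootMultiplicity_iff_isRoot hp0).2 ⟨hx, h⟩
    have := hsimple x hx
    omega
  have s1 : ∀ x, (derivative p).IsRoot x → (derivative (derivative p)).eval x ≠ 0 :=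
    fun x hx h => by
      have := lag x
      rw [hx.eq_zero, h] at this
      simp at this
  have s2 : ∀ x, (derivative (derivative p)).IsRoot x →
      (derivative p).eval x * (derivative (derivative (derivative p))).eval x < 0 :=
    fun x hx => by
      have := lag x
      rw [hx.eq_zero] at this
      linarith
  have hz2 : Multiset.card (derivative (derivative p)).roots = n - 2 := by
    apply le_antisymm (e2 ▸ card_roots' _)
    have h1 := card_roots_le_derivative (derivative p)
    have h2 := Multiset.toFinset_card_le (derivative p).roots
    omega
  rcases hκ.eq_or_lt with rfl | hκ
  · have : Hk 0 p = -(p * derivative (derivative p)) := by simp [Hk]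
    rw [Zreal, Zreal, this, roots_neg, roots_mul (mul_ne_zero hp0 hp2), Multiset.card_add, hz2]
    omega
  obtain ⟨dH, lH⟩ := degree_neg_Hk (hdeg.symm ▸ hn : 2 ≤ p.natDegree) hκ
  have hH : Zreal (Hk κ p) = Zreal (-Hk κ p) := by rw [Zreal, Zreal, roots_neg]
  rw [hH]
  have evG : ∀ x, (-Hk κ p).eval x = -κ * (derivative p).eval x ^ 2 +
      p.eval x * (derivative (derivative p)).eval x := fun x => by simp [Hk]; ring
  have evG' : ∀ x, (derivative (-Hk κ p)).eval x =
      (1 - 2 * κ) * (derivative p).eval x * (derivative (derivative p)).eval x +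
        p.eval x * (derivative (derivative (derivative p))).eval x := fun x => by
    simp [Hk, derivative_pow]; ring
  generalize -Hk κ p = G at *
  have hG0 : G ≠ 0 := by rintro rfl; simp at lH
  -- at a zero of `G` one has `p = κ p'² / p''`, which turns `G' p' p''` into a Laguerre expression
  have sG : ∀ x, G.IsRoot x → 0 < (derivative G).eval x *
      ((derivative p).eval x * (derivative (derivative p)).eval x) := by
    intro x hx
    have hx0 := hx.eq_zero
    rw [evG] at hx0
    have hb : (derivative p).eval x ≠ 0 := by
      intro hb
      have hc := s1 x hb
      have : p.eval x = 0 := by simpa [hb, hc] using hx0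
      exact s0 x this hb
    have hc : (derivative (derivative p)).eval x ≠ 0 := by
      intro hc
      rw [hc] at hx0
      have : -κ * (derivative p).eval x ^ 2 ≠ 0 :=
        mul_ne_zero (by linarith) (pow_ne_zero _ hb)
      exact this (by simpa using hx0)
    have hL := lag x
    rw [evG']
    generalize (derivative p).eval x = b at *
    generalize (derivative (derivative p)).eval x = c at *
    generalize (derivative (derivative (derivative p))).eval x = d at *
    generalize p.eval x = a at *
    have : ((1 - 2 * κ) * b * c + a * d) * (b * c) =
        b ^ 2 * (-κ * (c ^ 2 - b * d) + (1 - κ) * c ^ 2) := by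
      linear_combination (b * d) * hx0
    rw [this]
    have h1 : 0 < -κ := by linarith
    have h2 : 0 < 1 - κ := by linarith
    positivity
  have hnG : G.roots.Nodup := roots_nodup_of_simple hG0 fun x hx h => by
    have := sG x hx
    rw [h] at this
    simp at this
  have hnp : p.roots.Nodup := roots_nodup_of_simple hp0 s0
  have hn2 : (derivative (derivative p)).roots.Nodup := roots_nodup_of_simple hp2 fun x hx h => by
    have := s2 x hx
    rw [h] at this
    simp at this
  have I1 := sum_sign_derivative (p * derivative p)
    (by rw [natDegree_mul hp0 hp1, hdeg, e1]; exact ⟨n - 1, by omega⟩)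
    (by
      rw [leadingCoeff_mul, l1]
      have : 0 < p.leadingCoeff ^ 2 * n := by positivity
      linarith)
    (fun x hx => by
      rw [derivative_mul, eval_add, eval_mul, eval_mul]
      rcases root_mul.1 hx with h | h
      · rw [h.eq_zero]; simpa using s0 x h
      · rw [h.eq_zero]; simpa using ⟨fun h' => s0 x h' h, s1 x h⟩)
  have hGp : ∀ x, G.IsRoot x → ¬ (derivative p * derivative (derivative p)).IsRoot x :=
    fun x hx h => by
      have := sG x hx
      rw [← eval_mul, h.eq_zero] at this
      simp at this
  have I2 := sum_sign_derivative (G * (derivative p * derivative (derivative p)))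
    (by
      rw [natDegree_mul hG0 (mul_ne_zero hp1 hp2), natDegree_mul hp1 hp2, dH, hdeg, e1, e2]
      exact ⟨2 * n - 3, by omega⟩)
    (by
      rw [leadingCoeff_mul, leadingCoeff_mul, l2, l1]
      have : 0 < (n : ℝ) - 1 := by linarith
      have : 0 < G.leadingCoeff * (p.leadingCoeff ^ 2 * n ^ 2 * ((n : ℝ) - 1)) := by positivity
      linarith)
    (fun x hx => by
      rw [derivative_mul, derivative_mul]
      simp only [eval_add, eval_mul]
      rcases root_mul.1 hx with h | h
      · rw [h.eq_zero]; simpa using (sG x h).ne'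
      · have hGx : G.eval x ≠ 0 := fun h' => hGp x h' h
        rcases root_mul.1 h with h | h
        · rw [h.eq_zero]; simpa using ⟨hGx, s1 x h⟩
        · rw [h.eq_zero]; simpa [hGx] using (s2 x h).ne)
  rw [sum_roots_mul (mul_ne_zero hp0 hp1) s0] at I1
  rw [sum_roots_mul (mul_ne_zero hG0 (mul_ne_zero hp1 hp2)) hGp,
    sum_roots_mul (mul_ne_zero hp1 hp2) s1] at I2
  -- the contributions of the zeros of `p`, of `G` and of `p''` are `+1`, `+1` and `-1`
  have A : ∑ x ∈ p.roots.toFinset,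
      ((SignType.sign ((derivative (p * derivative p)).eval x) : SignType) : ℤ) = Zreal p := by
    rw [Finset.sum_congr rfl (g := fun _ => (1 : ℤ)), Finset.sum_const,
      Multiset.toFinset_card_of_nodup hnp, Zreal]
    · simp
    · intro x hx
      have h := isRoot_of_mem_roots (Multiset.mem_toFinset.1 hx)
      have := s0 x h
      rw [derivative_mul, eval_add, eval_mul, eval_mul, h.eq_zero, zero_mul, add_zero,
        sign_pos (mul_self_pos.2 this)]
      rfl
  have B : ∑ x ∈ G.roots.toFinset, ((SignType.sign ((derivative
      (G * (derivative p * derivative (derivative p)))).eval x) : SignType) : ℤ) = Zreal G := by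
    rw [Finset.sum_congr rfl (g := fun _ => (1 : ℤ)), Finset.sum_const,
      Multiset.toFinset_card_of_nodup hnG, Zreal]
    · simp
    · intro x hx
      have h := isRoot_of_mem_roots (Multiset.mem_toFinset.1 hx)
      rw [derivative_mul, eval_add, eval_mul, eval_mul, eval_mul, h.eq_zero, zero_mul, add_zero,
        sign_pos (sG x h)]
      rfl
  have D : ∑ x ∈ (derivative (derivative p)).roots.toFinset, ((SignType.sign ((derivative
      (G * (derivative p * derivative (derivative p)))).eval x) : SignType) : ℤ) =
      -((n - 2 : ℕ) : ℤ) := by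
    rw [Finset.sum_congr rfl (g := fun _ => (-1 : ℤ)), Finset.sum_const,
      Multiset.toFinset_card_of_nodup hn2, hz2]
    · simp
    · intro x hx
      have h := isRoot_of_mem_roots (Multiset.mem_toFinset.1 hx)
      have hb : (derivative p).eval x ≠ 0 := fun hb => s1 x hb h
      have hG : 0 < G.eval x := by
        rw [evG, h.eq_zero, mul_zero, add_zero]
        have : 0 < -κ := by linarith
        positivity
      rw [derivative_mul, derivative_mul]
      simp only [eval_add, eval_mul]
      rw [h.eq_zero, mul_zero, mul_zero, mul_zero, zero_add, zero_add,
        sign_neg (mul_neg_of_pos_of_neg hG (s2 x h))]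
      rfl
  have E : ∑ x ∈ (derivative p).roots.toFinset, ((SignType.sign ((derivative
      (G * (derivative p * derivative (derivative p)))).eval x) : SignType) : ℤ) =
      ∑ x ∈ (derivative p).roots.toFinset,
      ((SignType.sign ((derivative (p * derivative p)).eval x) : SignType) : ℤ) := by
    refine Finset.sum_congr rfl fun x hx => ?_
    have h := isRoot_of_mem_roots (Multiset.mem_toFinset.1 hx)
    have hc := s1 x h
    have hG := evG x
    rw [h.eq_zero] at hG
    rw [derivative_mul, derivative_mul, derivative_mul]
    simp only [eval_add, eval_mul]
    rw [hG, h.eq_zero]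
    have : ∀ a c : ℝ, ∀ u v : ℝ, u * (0 * c) + (-κ * 0 ^ 2 + a * c) * (c * c + 0 * v) =
      (a * c) * (c * c) := by intros; ring
    rw [this, sign_mul, sign_pos (mul_self_pos.2 hc), mul_one, mul_zero, zero_add]
  rw [A] at I1
  rw [B, D, E] at I2
  omega
end

section
/- Let n ≥ 2, let p be a real polynomial of degree n such that every real zero of p is simple and the derivative p' has n − 1 distinct real zeros (i.e., all zeros of p' are real and simple), and let 0 < κ < 1/2. Then Z_ℂ(p) − 2 ≤ Z_ℝ(H_κ[p]) ≤ n + Z_ℝ(p) − 2, where Z_ℂ(p) is the number of non-real complex roots of p counted with multiplicity. -/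
/-!
Write `H = Hk κ p` and `G = p * p''`, so that `H = κ p'² - G`.

*Upper bound.* For `κ = 0` the zeros of `Hk 0 p = -G` are those of `p` and of `p''`, at most
`Z_ℝ(p) + n - 2` in number; for `0 < κ < 1/2` it is shown that `H` has no more real zeros than `G`.
Since `p'` is real-rooted, so is `p''`, and the Laguerre inequality for `p''` gives `H'' > 0` at
every double zero of `H` (`Hk_double_root`). In particular zeros of `H` have multiplicity at most
two, and the multiplicity is at most the number of sides on which `H` is positive nearby.
Equivalently, a critical point of `φ = G / p'²` with value in `(0, 1/2)` is a strict local maximum.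
As the leading coefficient of `H` is negative, an interval of positivity starting at a zero of `H`
ends at another zero; there `φ < κ` inside and `φ = κ` at both ends, so `φ`, having no positive
interior minimum, becomes nonpositive (`exists_nonpos_between`). Hence each zero of `H`, on each
side where `H` is positive, is matched with the nearest zero of `G` on that side. The matching is
injective for each side separately, and a zero of `G` used from both sides is a local minimum of
`G`, hence a multiple zero; `card_roots_le_of_matches` sums this up.

*Lower bound.* At the zeros of `p'` one has `H = -p p''`, and `p''` has opposite signs at
consecutive ones. So each of the `n - 2` gaps between consecutive zeros of `p'` contains a zero of
`p` or of `H`, which gives `n - 2 ≤ Z_ℝ(p) + Z_ℝ(H)`.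
-/

open Polynomial

open scoped Topology

/-! ### Local analysis of real polynomials -/

/-- The Laguerre inequality for a polynomial with only real zeros. -/
lemma laguerre_of_splits {q : ℝ[X]} (hq : q.Splits) (x : ℝ) :
    q.eval x * (derivative (derivative q)).eval x ≤ ((derivative q).eval x) ^ 2 := by
  have key : ∀ m : Multiset ℝ, ∀ a : ℝ,
      (C a * (m.map (fun r => X - C r)).prod).eval x *
        (derivative (derivative (C a * (m.map (fun r => X - C r)).prod))).eval x ≤
      ((derivative (C a * (m.map (fun r => X - C r)).prod)).eval x) ^ 2 := by
    intro m a
    induction m using Multiset.induction_on with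
    | empty => simp
    | cons r m ih =>
      rw [Multiset.map_cons, Multiset.prod_cons, mul_left_comm]
      generalize C a * (m.map (fun r => X - C r)).prod = f at ih ⊢
      simp only [derivative_mul, derivative_add, derivative_sub, derivative_X, derivative_C,
        eval_add, eval_mul, eval_sub, eval_X, eval_C, sub_zero, one_mul]
      nlinarith [mul_nonneg (sq_nonneg (x - r)) (sub_nonneg.2 ih), sq_nonneg (f.eval x)]
  have h := key q.roots q.leadingCoeff
  rwa [← hq.eq_prod_roots] at h

lemma eventually_ne_zero {q : ℝ[X]} (hq : q ≠ 0) (x : ℝ) :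
    ∀ᶠ z in 𝓝[≠] x, q.eval z ≠ 0 := by
  have hfin : ({z | q.IsRoot z} \ {x}).Finite := (q.finite_setOfPred_isRoot hq).sdiff
  have : ({z | q.IsRoot z} \ {x})ᶜ ∈ 𝓝 x := hfin.isClosed.isOpen_compl.mem_nhds (by simp)
  filter_upwards [nhdsWithin_le_nhds this, self_mem_nhdsWithin] with z hz hzx h0
  exact hz ⟨h0, hzx⟩

lemma eventually_pos_of_double {q : ℝ[X]} {x : ℝ} (h0 : q.eval x = 0)
    (h1 : (derivative q).eval x = 0) (h2 : 0 < (derivative (derivative q)).eval x) :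
    ∀ᶠ z in 𝓝[≠] x, 0 < q.eval z := by
  have hq : q ≠ 0 := by rintro rfl; simp at h2
  have hd : deriv (fun z => q.eval z) = fun z => (derivative q).eval z := by
    funext z; exact Polynomial.deriv q
  have hmin : IsLocalMin (fun z => q.eval z) x := by
    apply isLocalMin_of_deriv_deriv_pos _ _ q.continuous.continuousAt
    · rw [hd, Polynomial.deriv]; exact h2
    · rw [hd]; exact h1
  filter_upwards [nhdsWithin_le_nhds hmin, eventually_ne_zero hq x] with z hz hne
  exact lt_of_le_of_ne (by simpa [h0] using hz) (Ne.symm hne)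

lemma eventually_pos_right {q : ℝ[X]} {x : ℝ} (h0 : q.eval x = 0)
    (h1 : 0 < (derivative q).eval x) : ∀ᶠ z in 𝓝[>] x, 0 < q.eval z := by
  have := eventually_nhdsWithin_sign_eq_of_deriv_pos (f := fun z => q.eval z) (x₀ := x)
    (by rw [Polynomial.deriv]; exact h1) h0
  filter_upwards [nhdsWithin_le_nhds this, self_mem_nhdsWithin] with z hz hzx
  rw [sign_pos (sub_pos.2 hzx)] at hz
  exact sign_eq_one_iff.1 hz

lemma exists_root_between {q : ℝ[X]} {a b : ℝ} (hab : a < b)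
    (h : q.eval a * q.eval b < 0) : ∃ z, a < z ∧ z < b ∧ q.eval z = 0 := by
  have hc : ContinuousOn (fun z => q.eval z) (Set.Icc a b) := q.continuous.continuousOn
  rcases mul_neg_iff.1 h with ⟨h1, h2⟩ | ⟨h1, h2⟩
  · obtain ⟨z, hz, h⟩ := intermediate_value_Ioo' hab.le hc ⟨h2, h1⟩
    exact ⟨z, hz.1, hz.2, h⟩
  · obtain ⟨z, hz, h⟩ := intermediate_value_Ioo hab.le hc ⟨h1, h2⟩
    exact ⟨z, hz.1, hz.2, h⟩

/-- A polynomial that is positive immediately to the right of `x` and nonpositive somewhere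
further on has a first zero after `x`. -/
lemma exists_next_root {q : ℝ[X]} {x w : ℝ} (hpos : ∀ᶠ z in 𝓝[>] x, 0 < q.eval z)
    (hxw : x < w) (hw : q.eval w ≤ 0) :
    ∃ y, x < y ∧ y ≤ w ∧ q.eval y = 0 ∧ ∀ z ∈ Set.Ioo x y, 0 < q.eval z := by
  have hq : q ≠ 0 := by
    rintro rfl
    obtain ⟨z, hz⟩ := hpos.exists
    simp at hz
  have aux : ∀ w, x < w → q.eval w ≤ 0 → ∃ y, x < y ∧ y ≤ w ∧ q.eval y = 0 := by
    intro w hxw hw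
    obtain ⟨z, hz, hz2⟩ := (hpos.and (Ioo_mem_nhdsGT hxw)).exists
    rcases hw.lt_or_eq with hw | hw
    · obtain ⟨y, h1, h2, h3⟩ := exists_root_between hz2.2 (mul_neg_of_pos_of_neg hz hw)
      exact ⟨y, hz2.1.trans h1, h2.le, h3⟩
    · exact ⟨w, hxw, le_rfl, hw⟩
  set S := q.roots.toFinset.filter (fun y => x < y) with hS
  have mS : ∀ y, y ∈ S ↔ q.eval y = 0 ∧ x < y := by
    intro y; simp [hS, hq]
  have hne : S.Nonempty := by
    obtain ⟨y, h1, -, h3⟩ := aux w hxw hw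
    exact ⟨y, (mS y).2 ⟨h3, h1⟩⟩
  have hmem := (mS _).1 (S.min'_mem hne)
  have hle : ∀ w, x < w → q.eval w ≤ 0 → S.min' hne ≤ w := by
    intro w hxw hw
    obtain ⟨y, h1, h2, h3⟩ := aux w hxw hw
    exact (S.min'_le y ((mS y).2 ⟨h3, h1⟩)).trans h2
  refine ⟨S.min' hne, hmem.2, hle w hxw hw, hmem.1, ?_⟩
  intro z hz
  by_contra hcon
  exact absurd (hle z hz.1 (not_lt.1 hcon)) (not_le.2 hz.2)

/-! ### Double zeros of `Hk κ p` -/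

lemma eval_Hk (κ : ℝ) (p : ℝ[X]) (x : ℝ) : (Hk κ p).eval x =
    κ * ((derivative p).eval x) ^ 2 - p.eval x * (derivative (derivative p)).eval x := by
  simp [Hk]

lemma eval_derivative_Hk (κ : ℝ) (p : ℝ[X]) (x : ℝ) : (derivative (Hk κ p)).eval x =
    (2 * κ - 1) * ((derivative p).eval x * (derivative (derivative p)).eval x)
      - p.eval x * (derivative (derivative (derivative p))).eval x := by
  simp [Hk, derivative_pow]
  ring

lemma eval_derivative2_Hk (κ : ℝ) (p : ℝ[X]) (x : ℝ) :
    (derivative (derivative (Hk κ p))).eval x =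
    (2 * κ - 1) * ((derivative (derivative p)).eval x ^ 2)
      + (2 * κ - 2) * ((derivative p).eval x * (derivative (derivative (derivative p))).eval x)
      - p.eval x * (derivative (derivative (derivative (derivative p)))).eval x := by
  simp [Hk, derivative_pow]
  ring

/-- With `a, b, s, t, w` standing for `p, p', p'', p''', p''''` at a point: at a double zero of
`Hk κ p`, the Laguerre inequality for `p''` makes the second derivative of `Hk κ p` positive; it is
in fact at least `(1 - 2κ)(1 - κ)s²/κ`. -/
lemma second_derivative_pos {κ a b s t w : ℝ} (hκ0 : 0 < κ) (hκ : κ < 1 / 2) (hb : b ≠ 0)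
    (h0 : κ * b ^ 2 - a * s = 0) (h1 : (2 * κ - 1) * (b * s) - a * t = 0)
    (hL : s * w ≤ t ^ 2) :
    0 < (2 * κ - 1) * s ^ 2 + (2 * κ - 2) * (b * t) - a * w := by
  have hs : s ≠ 0 := by
    rintro rfl
    have : κ * b ^ 2 = 0 := by linarith
    rcases mul_eq_zero.1 this with h | h
    · linarith
    · exact hb (pow_eq_zero_iff (two_ne_zero) |>.1 h)
  have ha : a = κ * b ^ 2 / s := by rw [eq_div_iff hs]; linarith
  have ht : t = -(1 - 2 * κ) * s ^ 2 / (κ * b) := by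
    rw [eq_div_iff (by positivity)]
    have h2 : b * ((2 * κ - 1) * s ^ 2 - κ * b * t) = 0 := by
      rw [ha] at h1
      field_simp at h1
      linear_combination h1
    rcases mul_eq_zero.1 h2 with h | h
    · exact absurd h hb
    · linarith
  have hw : a * w ≤ (1 - 2 * κ) ^ 2 * s ^ 2 / κ := by
    have e1 : a * w = κ * b ^ 2 / s ^ 2 * (s * w) := by rw [ha]; field_simp
    have e2 : (1 - 2 * κ) ^ 2 * s ^ 2 / κ = κ * b ^ 2 / s ^ 2 * t ^ 2 := by rw [ht]; field_simp
    rw [e1, e2]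
    exact mul_le_mul_of_nonneg_left hL (by positivity)
  have hbt : b * t = -(1 - 2 * κ) * s ^ 2 / κ := by rw [ht]; field_simp
  have h3 : 0 < (1 - 2 * κ) * (1 - κ) * s ^ 2 / κ := by
    have : 0 < 1 - 2 * κ := by linarith
    have : 0 < 1 - κ := by linarith
    positivity
  have h4 : (2 * κ - 1) * s ^ 2 + (2 * κ - 2) * (b * t) - (1 - 2 * κ) ^ 2 * s ^ 2 / κ
      = (1 - 2 * κ) * (1 - κ) * s ^ 2 / κ := by
    rw [hbt]; field_simp; ring
  linarith

/-- The Laguerre inequality for the second derivative of `p`. -/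
def LaguerreTwo (p : ℝ[X]) : Prop :=
  ∀ x : ℝ, (derivative (derivative p)).eval x *
    (derivative (derivative (derivative (derivative p)))).eval x ≤
    (derivative (derivative (derivative p))).eval x ^ 2

lemma Hk_double_root {κ : ℝ} {p : ℝ[X]} (hκ0 : 0 < κ) (hκ : κ < 1 / 2) (hL : LaguerreTwo p)
    {x : ℝ} (hb : (derivative p).eval x ≠ 0) (h0 : (Hk κ p).eval x = 0)
    (h1 : (derivative (Hk κ p)).eval x = 0) :
    0 < (derivative (derivative (Hk κ p))).eval x := by
  rw [eval_derivative2_Hk]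
  rw [eval_Hk] at h0
  rw [eval_derivative_Hk] at h1
  exact second_derivative_pos hκ0 hκ hb h0 h1 (hL x)

/-- Between two consecutive zeros of `Hk κ p` enclosing an interval of positivity, `p * p''` takes
a nonpositive value: otherwise `p * p'' / p'²` would have an interior minimum with value
`k ∈ (0, κ)`, so `Hk k p` would have a local maximum at a double zero. -/
lemma exists_nonpos_between {κ : ℝ} {p : ℝ[X]} (hκ : κ < 1 / 2) (hL : LaguerreTwo p)
    {x y : ℝ} (hxy : x < y)
    (hx : (Hk κ p).eval x = 0) (hy : (Hk κ p).eval y = 0)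
    (hx' : (derivative p).eval x ≠ 0) (hy' : (derivative p).eval y ≠ 0)
    (hpos : ∀ z ∈ Set.Ioo x y, 0 < (Hk κ p).eval z) :
    ∃ z ∈ Set.Icc x y, (p * derivative (derivative p)).eval z ≤ 0 := by
  by_contra hcon
  push Not at hcon
  have hd : ∀ z ∈ Set.Icc x y, (derivative p).eval z ≠ 0 := by
    intro z hz h
    rcases hz.1.eq_or_lt with rfl | h1
    · exact hx' h
    rcases hz.2.eq_or_lt with rfl | h2
    · exact hy' h
    have h3 := hpos z ⟨h1, h2⟩
    have h4 := hcon z hz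
    rw [eval_Hk, h] at h3
    rw [eval_mul] at h4
    linarith
  set φ : ℝ → ℝ := fun z => (p * derivative (derivative p)).eval z / (derivative p).eval z ^ 2
    with hφ
  have hH : ∀ k, ∀ z ∈ Set.Icc x y,
      (Hk k p).eval z = (derivative p).eval z ^ 2 * (k - φ z) := by
    intro k z hz
    have := hd z hz
    rw [eval_Hk, hφ]
    simp only [eval_mul]
    field_simp
  have hc : ContinuousOn φ (Set.Icc x y) := by
    apply ContinuousOn.div (Polynomial.continuous _).continuousOn
      ((Polynomial.continuous _).pow 2).continuousOn
    intro z hz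
    exact pow_ne_zero 2 (hd z hz)
  obtain ⟨c, hcm, hmin⟩ := isCompact_Icc.exists_isMinOn ⟨x, Set.left_mem_Icc.2 hxy.le⟩ hc
  have hmid : (x + y) / 2 ∈ Set.Ioo x y := ⟨by linarith, by linarith⟩
  have hmid' := Set.Ioo_subset_Icc_self hmid
  have hlt : φ c < κ := by
    have h1 : φ c ≤ φ ((x + y) / 2) := hmin hmid'
    have h2 := hpos _ hmid
    rw [hH κ _ hmid'] at h2
    have h3 := (pos_iff_pos_of_mul_pos h2).1 (by have := hd _ hmid'; positivity)
    linarith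
  have hcH : 0 < (Hk κ p).eval c := by
    rw [hH κ c hcm]
    have := hd c hcm
    have := sub_pos.2 hlt
    positivity
  have hcI : c ∈ Set.Ioo x y := by
    refine ⟨lt_of_le_of_ne hcm.1 ?_, lt_of_le_of_ne hcm.2 ?_⟩
    · rintro rfl; linarith
    · rintro rfl; linarith
  have hk0 : 0 < φ c := by
    have h1 := hcon c hcm
    have h2 := hd c hcm
    simp only [hφ]
    positivity
  have hz0 : (Hk (φ c) p).eval c = 0 := by rw [hH _ c hcm]; simp
  have hnb : Set.Icc x y ∈ 𝓝 c := Icc_mem_nhds hcI.1 hcI.2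
  have hle : ∀ z ∈ Set.Icc x y, (Hk (φ c) p).eval z ≤ 0 := by
    intro z hz
    rw [hH _ z hz]
    have : φ c ≤ φ z := hmin hz
    exact mul_nonpos_of_nonneg_of_nonpos (sq_nonneg _) (by linarith)
  have hmax : IsLocalMax (fun z => (Hk (φ c) p).eval z) c := by
    filter_upwards [hnb] with z hz
    rw [hz0]; exact hle z hz
  have hz1 : (derivative (Hk (φ c) p)).eval c = 0 := by
    rw [← Polynomial.deriv]; exact hmax.deriv_eq_zero
  have hz2 := Hk_double_root hk0 (hlt.trans hκ) hL (hd c hcm) hz0 hz1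
  obtain ⟨z, h1, h2⟩ := ((eventually_pos_of_double hz0 hz1 hz2).and
    (nhdsWithin_le_nhds hnb)).exists
  exact absurd h1 (not_lt.2 (hle z h2))

/-! ### Degree and behaviour at infinity -/

lemma natDegree_Hk_le (κ : ℝ) (p : ℝ[X]) : (Hk κ p).natDegree ≤ 2 * p.natDegree - 2 := by
  have h1 := natDegree_derivative_le p
  have h2 := natDegree_derivative_le (derivative p)
  rcases Nat.lt_or_ge p.natDegree 2 with hn | hn
  · have h3 : derivative (derivative p) = 0 := by
      rw [derivative_of_natDegree_zero]; omega
    have h4 : (derivative p).natDegree = 0 := by omega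
    rw [Hk, h3, mul_zero, sub_zero]
    refine (natDegree_C_mul_le _ _).trans (natDegree_pow_le.trans ?_)
    omega
  · refine (natDegree_sub_le _ _).trans (max_le ?_ ?_)
    · refine (natDegree_C_mul_le _ _).trans (natDegree_pow_le.trans ?_)
      omega
    · refine natDegree_mul_le.trans ?_
      omega

/-- For `κ < 1/2` and `deg p ≥ 2` the coefficient of top degree `2 deg p - 2` is negative. -/
lemma coeff_Hk_neg {κ : ℝ} {p : ℝ[X]} (hκ : κ < 1 / 2) (hn : 2 ≤ p.natDegree) :
    (Hk κ p).coeff (2 * p.natDegree - 2) < 0 := by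
  obtain ⟨m, hm⟩ : ∃ m, p.natDegree = m + 2 := ⟨p.natDegree - 2, by omega⟩
  have hp : p ≠ 0 := by rintro rfl; simp at hn
  have hlc : p.coeff (m + 2) ≠ 0 := by rw [← hm]; exact leadingCoeff_ne_zero.2 hp
  have h1 := natDegree_derivative_le p
  have h2 := natDegree_derivative_le (derivative p)
  have e1 : (derivative p ^ 2).coeff (2 * p.natDegree - 2) = ((m + 2) * p.coeff (m + 2)) ^ 2 := by
    rw [show 2 * p.natDegree - 2 = (m + 1) + (m + 1) by omega, pow_two,
      coeff_mul_add_eq_of_natDegree_le (by omega) (by omega), coeff_derivative]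
    push_cast
    ring
  have e2 : (p * derivative (derivative p)).coeff (2 * p.natDegree - 2) =
      (m + 2) * (m + 1) * p.coeff (m + 2) ^ 2 := by
    rw [show 2 * p.natDegree - 2 = (m + 2) + m by omega,
      coeff_mul_add_eq_of_natDegree_le (by omega) (by omega), coeff_derivative, coeff_derivative]
    push_cast
    ring
  rw [Hk, coeff_sub, coeff_C_mul, e1, e2]
  have : κ * ((m + 2) * p.coeff (m + 2)) ^ 2 - (m + 2) * (m + 1) * p.coeff (m + 2) ^ 2
      = (m + 2) * p.coeff (m + 2) ^ 2 * (κ * (m + 2) - (m + 1)) := by ring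
  rw [this]
  have hm0 : (0 : ℝ) ≤ m := Nat.cast_nonneg m
  apply mul_neg_of_pos_of_neg
  · positivity
  · nlinarith

lemma Hk_ne_zero {κ : ℝ} {p : ℝ[X]} (hκ : κ < 1 / 2) (hn : 2 ≤ p.natDegree) : Hk κ p ≠ 0 := by
  intro h
  have := coeff_Hk_neg hκ hn
  simp [h] at this

lemma exists_Hk_neg {κ : ℝ} {p : ℝ[X]} (hκ : κ < 1 / 2) (hn : 2 ≤ p.natDegree) (x : ℝ) :
    ∃ w, x < w ∧ (Hk κ p).eval w ≤ 0 := by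
  have hneg := coeff_Hk_neg hκ hn
  have hdeg : (Hk κ p).natDegree = 2 * p.natDegree - 2 :=
    le_antisymm (natDegree_Hk_le κ p) (le_natDegree_of_ne_zero hneg.ne)
  have ht := tendsto_atBot_of_leadingCoeff_nonpos (Hk κ p)
    (natDegree_pos_iff_degree_pos.1 (by omega)) (by rw [leadingCoeff, hdeg]; exact hneg.le)
  obtain ⟨w, h1, h2⟩ := ((Filter.eventually_gt_atTop x).and
    (ht.eventually (Filter.eventually_le_atBot 0))).exists
  exact ⟨w, h1, h2⟩

/-! ### Matching zeros of `Hk κ p` with zeros of `p * p''` -/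

/-- `y` is the first zero of `G` to the right of `x`, with `G` positive on `[x, y)` and `H`
positive on `(x, y]`. -/
def RightMatch (H G : ℝ[X]) (x y : ℝ) : Prop :=
  x < y ∧ G.eval y = 0 ∧ (∀ z ∈ Set.Ico x y, 0 < G.eval z) ∧ ∀ z ∈ Set.Ioc x y, 0 < H.eval z

/-- Mirror image of `RightMatch`. -/
def LeftMatch (H G : ℝ[X]) (x y : ℝ) : Prop :=
  y < x ∧ G.eval y = 0 ∧ (∀ z ∈ Set.Ioc y x, 0 < G.eval z) ∧ ∀ z ∈ Set.Ico y x, 0 < H.eval z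

lemma exists_rightMatch {κ : ℝ} {p : ℝ[X]} (hκ0 : 0 < κ) (hκ : κ < 1 / 2) (hL : LaguerreTwo p)
    (hn : 2 ≤ p.natDegree) (hne : ∀ z, (Hk κ p).eval z = 0 → (derivative p).eval z ≠ 0)
    {x : ℝ} (hx : (Hk κ p).eval x = 0) (hpos : ∀ᶠ z in 𝓝[>] x, 0 < (Hk κ p).eval z) :
    ∃ y, RightMatch (Hk κ p) (p * derivative (derivative p)) x y := by
  have hG : ∀ z, (Hk κ p).eval z = 0 → 0 < (p * derivative (derivative p)).eval z := by
    intro z hz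
    have h1 := hne z hz
    rw [eval_Hk] at hz
    rw [eval_mul]
    have : 0 < κ * (derivative p).eval z ^ 2 := by positivity
    linarith
  obtain ⟨w, hxw, hw⟩ := exists_Hk_neg hκ hn x
  obtain ⟨x₂, hxx₂, -, hx₂, hpos₂⟩ := exists_next_root hpos hxw hw
  obtain ⟨z, hz, hz0⟩ := exists_nonpos_between hκ hL hxx₂ hx hx₂ (hne x hx) (hne x₂ hx₂) hpos₂
  have hxz : x < z := by
    refine lt_of_le_of_ne hz.1 ?_
    rintro rfl
    exact absurd (hG x hx) (not_lt.2 hz0)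
  have hzx₂ : z < x₂ := by
    refine lt_of_le_of_ne hz.2 ?_
    rintro rfl
    exact absurd (hG z hx₂) (not_lt.2 hz0)
  have hGpos : ∀ᶠ u in 𝓝[>] x, 0 < (p * derivative (derivative p)).eval u :=
    nhdsWithin_le_nhds ((Polynomial.continuous _).continuousAt.eventually
      (lt_mem_nhds (hG x hx)))
  obtain ⟨y, hxy, hyz, hy, hy2⟩ := exists_next_root hGpos hxz hz0
  refine ⟨y, hxy, hy, ?_, ?_⟩
  · intro u hu
    rcases hu.1.eq_or_lt with rfl | h
    · exact hG _ hx
    · exact hy2 u ⟨h, hu.2⟩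
  · intro u hu
    exact hpos₂ u ⟨hu.1, hu.2.trans_lt (hyz.trans_lt hzx₂)⟩

lemma derivative_comp_neg (q : ℝ[X]) :
    derivative (q.comp (-X)) = -((derivative q).comp (-X)) := by
  simp [derivative_comp]

lemma Hk_comp_neg (κ : ℝ) (p : ℝ[X]) : Hk κ (p.comp (-X)) = (Hk κ p).comp (-X) := by
  simp [Hk, derivative_comp_neg]

lemma exists_leftMatch {κ : ℝ} {p : ℝ[X]} (hκ0 : 0 < κ) (hκ : κ < 1 / 2) (hL : LaguerreTwo p)
    (hn : 2 ≤ p.natDegree) (hne : ∀ z, (Hk κ p).eval z = 0 → (derivative p).eval z ≠ 0)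
    {x : ℝ} (hx : (Hk κ p).eval x = 0) (hpos : ∀ᶠ z in 𝓝[<] x, 0 < (Hk κ p).eval z) :
    ∃ y, LeftMatch (Hk κ p) (p * derivative (derivative p)) x y := by
  have hL' : LaguerreTwo (p.comp (-X)) := by
    intro z
    have := hL (-z)
    simpa [derivative_comp_neg] using this
  have ht : Filter.Tendsto (fun z : ℝ => -z) (𝓝[>] (-x)) (𝓝[<] x) := by
    have := tendsto_neg_nhdsGT (a := -x)
    simpa using this
  obtain ⟨y, h1, h2, h3, h4⟩ := exists_rightMatch (p := p.comp (-X)) (x := -x) hκ0 hκ hL'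
    (by simpa [natDegree_comp] using hn)
    (by
      intro z hz
      rw [Hk_comp_neg] at hz
      have := hne (-z) (by simpa using hz)
      simpa [derivative_comp_neg] using this)
    (by rw [Hk_comp_neg]; simpa using hx)
    (by
      filter_upwards [ht.eventually hpos] with z hz
      rw [Hk_comp_neg]; simpa using hz)
  simp only [Hk_comp_neg, derivative_comp_neg, derivative_neg, neg_neg, eval_mul, eval_comp,
    eval_neg, eval_X] at h2 h3 h4
  refine ⟨-y, by linarith, by simpa using h2, ?_, ?_⟩
  · intro z hz
    have := h3 (-z) ⟨by linarith [hz.2], by linarith [hz.1]⟩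
    simpa using this
  · intro z hz
    have := h4 (-z) ⟨by linarith [hz.2], by linarith [hz.1]⟩
    simpa using this

lemma RightMatch.inj {H G : ℝ[X]} {x x' y : ℝ} (h : RightMatch H G x y)
    (h' : RightMatch H G x' y) (hx : H.eval x = 0) (hx' : H.eval x' = 0) : x = x' := by
  rcases lt_trichotomy x x' with hlt | heq | hlt
  · exact absurd hx' (h.2.2.2 x' ⟨hlt, h'.1.le⟩).ne'
  · exact heq
  · exact absurd hx (h'.2.2.2 x ⟨hlt, h.1.le⟩).ne'

lemma LeftMatch.inj {H G : ℝ[X]} {x x' y : ℝ} (h : LeftMatch H G x y)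
    (h' : LeftMatch H G x' y) (hx : H.eval x = 0) (hx' : H.eval x' = 0) : x = x' := by
  rcases lt_trichotomy x x' with hlt | heq | hlt
  · exact absurd hx (h'.2.2.2 x ⟨h.1.le, hlt⟩).ne'
  · exact heq
  · exact absurd hx' (h.2.2.2 x' ⟨h'.1.le, hlt⟩).ne'

/-- A zero of `G` matched from both sides is a local minimum of `G`, hence a multiple zero. -/
lemma one_lt_rootMultiplicity_of_matches {H G : ℝ[X]} (hG : G ≠ 0) {x x' y : ℝ}
    (h : RightMatch H G x y) (h' : LeftMatch H G x' y) : 1 < rootMultiplicity y G := by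
  rw [one_lt_rootMultiplicity_iff_isRoot hG]
  refine ⟨h.2.1, ?_⟩
  have hmin : IsLocalMin (fun z => G.eval z) y := by
    filter_upwards [Ioo_mem_nhds h.1 h'.1] with z hz
    rw [h.2.1]
    rcases lt_trichotomy z y with hlt | rfl | hlt
    · exact (h.2.2.1 z ⟨hz.1.le, hlt⟩).le
    · exact h.2.1.ge
    · exact (h'.2.2.1 z ⟨hlt, hz.2.le⟩).le
  rw [IsRoot, ← Polynomial.deriv]
  exact hmin.deriv_eq_zero

lemma card_roots_eq_sum (q : ℝ[X]) :
    Multiset.card q.roots = ∑ x ∈ q.roots.toFinset, rootMultiplicity x q := by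
  rw [← Multiset.toFinset_sum_count_eq]
  simp only [count_roots]

open scoped Classical in
/-- If each zero of `H` is matched with zeros of `G` on at least as many sides as its
multiplicity, then `H` has at most as many real zeros as `G`. -/
lemma card_roots_le_of_matches {H G : ℝ[X]} (hH : H ≠ 0) (hG : G ≠ 0)
    (h : ∀ x, H.eval x = 0 → rootMultiplicity x H ≤
      (if ∃ y, RightMatch H G x y then 1 else 0) + (if ∃ y, LeftMatch H G x y then 1 else 0)) :
    Multiset.card H.roots ≤ Multiset.card G.roots := by
  set S := H.roots.toFinset with hS
  set T := G.roots.toFinset with hT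
  have mS : ∀ x, x ∈ S ↔ H.eval x = 0 := by intro x; simp [hS, hH]
  have mT : ∀ x, x ∈ T ↔ G.eval x = 0 := by intro x; simp [hT, hG]
  set R := S.filter (fun x => ∃ y, RightMatch H G x y) with hR
  set L := S.filter (fun x => ∃ y, LeftMatch H G x y) with hL
  set A := T.filter (fun y => ∃ x, RightMatch H G x y) with hA
  set B := T.filter (fun y => ∃ x, LeftMatch H G x y) with hB
  have hRA : R.card ≤ A.card := by
    refine Finset.card_le_card_of_forall_subsingleton (fun x y => RightMatch H G x y) ?_ ?_
    · intro x hx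
      obtain ⟨-, y, hy⟩ := Finset.mem_filter.1 hx
      exact ⟨y, Finset.mem_filter.2 ⟨(mT y).2 hy.2.1, x, hy⟩, hy⟩
    · intro y _ x hx x' hx'
      exact hx.2.inj hx'.2 ((mS x).1 (Finset.mem_filter.1 hx.1).1)
        ((mS x').1 (Finset.mem_filter.1 hx'.1).1)
  have hLB : L.card ≤ B.card := by
    refine Finset.card_le_card_of_forall_subsingleton (fun x y => LeftMatch H G x y) ?_ ?_
    · intro x hx
      obtain ⟨-, y, hy⟩ := Finset.mem_filter.1 hx
      exact ⟨y, Finset.mem_filter.2 ⟨(mT y).2 hy.2.1, x, hy⟩, hy⟩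
    · intro y _ x hx x' hx'
      exact hx.2.inj hx'.2 ((mS x).1 (Finset.mem_filter.1 hx.1).1)
        ((mS x').1 (Finset.mem_filter.1 hx'.1).1)
  calc Multiset.card H.roots = ∑ x ∈ S, rootMultiplicity x H := card_roots_eq_sum H
    _ ≤ ∑ x ∈ S, ((if ∃ y, RightMatch H G x y then 1 else 0) +
          (if ∃ y, LeftMatch H G x y then 1 else 0)) :=
        Finset.sum_le_sum fun x hx => h x ((mS x).1 hx)
    _ = R.card + L.card := by
        rw [Finset.sum_add_distrib, Finset.card_filter, Finset.card_filter]
    _ ≤ A.card + B.card := add_le_add hRA hLB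
    _ = ∑ y ∈ T, ((if ∃ x, RightMatch H G x y then 1 else 0) +
          (if ∃ x, LeftMatch H G x y then 1 else 0)) := by
        rw [Finset.sum_add_distrib, Finset.card_filter, Finset.card_filter]
    _ ≤ ∑ y ∈ T, rootMultiplicity y G := by
        refine Finset.sum_le_sum fun y hy => ?_
        have h1 : 0 < rootMultiplicity y G :=
          (rootMultiplicity_pos hG).2 ((mT y).1 hy)
        split_ifs with ha hb
        · obtain ⟨x, hx⟩ := ha
          obtain ⟨x', hx'⟩ := hb
          exact one_lt_rootMultiplicity_of_matches hG hx hx'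
        all_goals omega
    _ = Multiset.card G.roots := (card_roots_eq_sum G).symm

open scoped Classical in
/-- The multiplicity of a zero of `Hk κ p` is at most the number of sides on which `Hk κ p` is
positive nearby, and each such side carries a match. -/
lemma rootMultiplicity_Hk_le {κ : ℝ} {p : ℝ[X]} (hκ0 : 0 < κ) (hκ : κ < 1 / 2)
    (hL : LaguerreTwo p) (hn : 2 ≤ p.natDegree)
    (hne : ∀ z, (Hk κ p).eval z = 0 → (derivative p).eval z ≠ 0)
    {x : ℝ} (hx : (Hk κ p).eval x = 0) :
    rootMultiplicity x (Hk κ p) ≤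
      (if ∃ y, RightMatch (Hk κ p) (p * derivative (derivative p)) x y then 1 else 0) +
      (if ∃ y, LeftMatch (Hk κ p) (p * derivative (derivative p)) x y then 1 else 0) := by
  have hH := Hk_ne_zero hκ hn
  have right := exists_rightMatch hκ0 hκ hL hn hne hx
  have left := exists_leftMatch hκ0 hκ hL hn hne hx
  by_cases h1 : (derivative (Hk κ p)).eval x = 0
  · have h2 := Hk_double_root hκ0 hκ hL (hne x hx) hx h1
    have hev := eventually_pos_of_double hx h1 h2
    rw [if_pos (right (nhdsGT_le_nhdsNE x hev)), if_pos (left (nhdsLT_le_nhdsNE x hev))]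
    by_contra hcon
    have := (lt_rootMultiplicity_iff_isRoot_iterate_derivative hH).1 (not_le.1 hcon) 2 le_rfl
    exact h2.ne' this
  · have hm : rootMultiplicity x (Hk κ p) ≤ 1 := by
      by_contra hcon
      exact h1 ((one_lt_rootMultiplicity_iff_isRoot hH).1 (not_le.1 hcon)).2
    rcases lt_or_gt_of_ne h1 with hlt | hgt
    · have hev : ∀ᶠ z in 𝓝[<] x, 0 < (Hk κ p).eval z := by
        have ht : Filter.Tendsto (fun z : ℝ => -z) (𝓝[<] x) (𝓝[>] (-x)) := tendsto_neg_nhdsLT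
        have := eventually_pos_right (q := (Hk κ p).comp (-X)) (x := -x) (by simpa using hx)
          (by simpa [derivative_comp_neg] using hlt)
        filter_upwards [ht.eventually this] with z hz
        simpa using hz
      rw [if_pos (left hev)]
      omega
    · rw [if_pos (right (eventually_pos_right hx hgt))]
      omega

/-! ### Critical points of `p` -/

/-- Two zeros at which the derivative has the same sign enclose a third one. -/
lemma exists_root_of_derivative_mul_pos {q : ℝ[X]} {x y : ℝ} (hxy : x < y) (hx : q.eval x = 0)
    (hy : q.eval y = 0) (h : 0 < (derivative q).eval x * (derivative q).eval y) :
    ∃ z, x < z ∧ z < y ∧ q.eval z = 0 := by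
  obtain ⟨r, rfl⟩ := dvd_iff_isRoot.2 hx
  have hr : r.eval y = 0 := by
    have : (y - x) * r.eval y = 0 := by simpa using hy
    exact (mul_eq_zero.1 this).resolve_left (sub_ne_zero.2 hxy.ne')
  obtain ⟨r, rfl⟩ := dvd_iff_isRoot.2 hr
  simp only [derivative_mul, derivative_sub, derivative_X, derivative_C, eval_add, eval_mul,
    eval_sub, eval_X, eval_C, sub_zero, one_mul, sub_self, zero_mul,
    add_zero, zero_add] at h
  obtain ⟨z, h1, h2, h3⟩ := exists_root_between (q := r) hxy (by
    have hd : 0 < y - x := sub_pos.2 hxy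
    by_contra hcon
    have := mul_nonneg (sq_nonneg (y - x)) (not_lt.1 hcon)
    nlinarith)
  exact ⟨z, h1, h2, by simp [h3]⟩

lemma Zcomplex_add_Zreal_le (p : ℝ[X]) : Zcomplex p + Zreal p ≤ p.natDegree := by
  rcases eq_or_ne p 0 with rfl | hp
  · simp [Zcomplex, Zreal]
  set q := p.map (algebraMap ℝ ℂ) with hq
  have hq0 : q ≠ 0 := (Polynomial.map_ne_zero_iff (algebraMap ℝ ℂ).injective).2 hp
  have h1 : p.roots.map (algebraMap ℝ ℂ) ≤ q.roots.filter (fun z => ¬ z.im ≠ 0) := by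
    rw [Multiset.le_filter]
    refine ⟨map_roots_le hq0, ?_⟩
    intro z hz
    obtain ⟨a, -, rfl⟩ := Multiset.mem_map.1 hz
    simp
  have h2 := Multiset.card_le_card h1
  rw [Multiset.card_map] at h2
  have h3 := congrArg Multiset.card (Multiset.filter_add_not (fun z : ℂ => z.im ≠ 0) q.roots)
  rw [Multiset.card_add] at h3
  have h4 : Multiset.card q.roots ≤ p.natDegree := by
    have := q.card_roots'
    rwa [hq, natDegree_map] at this
  unfold Zcomplex Zreal
  rw [← hq]
  omega

/-- Between two consecutive critical points of `p` that are simple zeros of `p'` and not zeros of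
`p` there is a zero of `p` or of `Hk κ p`: the signs of `p''` at the two points are opposite, and
`Hk κ p = -p p''` there. -/
lemma exists_root_between_critical {κ : ℝ} {p : ℝ[X]} {x y : ℝ} (hxy : x < y)
    (hx : (derivative p).eval x = 0) (hy : (derivative p).eval y = 0)
    (hpx : p.eval x ≠ 0) (hpy : p.eval y ≠ 0)
    (hx2 : (derivative (derivative p)).eval x ≠ 0) (hy2 : (derivative (derivative p)).eval y ≠ 0)
    (hcons : ∀ z, x < z → z < y → (derivative p).eval z ≠ 0) :
    ∃ z, x < z ∧ z < y ∧ (p * Hk κ p).eval z = 0 := by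
  by_cases hp : p.eval x * p.eval y < 0
  · obtain ⟨z, h1, h2, h3⟩ := exists_root_between hxy hp
    exact ⟨z, h1, h2, by simp [h3]⟩
  have hp' : 0 < p.eval x * p.eval y :=
    lt_of_le_of_ne (not_lt.1 hp) (mul_ne_zero hpx hpy).symm
  have hs : (derivative (derivative p)).eval x * (derivative (derivative p)).eval y < 0 := by
    refine lt_of_le_of_ne (not_lt.1 fun hcon => ?_) (mul_ne_zero hx2 hy2)
    obtain ⟨z, h1, h2, h3⟩ := exists_root_of_derivative_mul_pos hxy hx hy hcon
    exact hcons z h1 h2 h3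
  obtain ⟨z, h1, h2, h3⟩ := exists_root_between (q := Hk κ p) hxy (by
    rw [eval_Hk, eval_Hk, hx, hy]
    have := mul_neg_of_pos_of_neg hp' hs
    linarith)
  exact ⟨z, h1, h2, by simp [h3]⟩

theorem stmt4 (n : ℕ) (hn : 2 ≤ n) (p : ℝ[X]) (hdeg : p.natDegree = n)
    (hsimple : ∀ x : ℝ, p.IsRoot x → rootMultiplicity x p = 1)
    (hder : (derivative p).roots.toFinset.card = n - 1)
    (κ : ℝ) (hκ0 : 0 < κ) (hκ : κ < 1 / 2) :
    Zcomplex p - 2 ≤ Zreal (Hk κ p) ∧ Zreal (Hk κ p) ≤ n + Zreal p - 2 := by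
  subst hdeg
  have hp : p ≠ 0 := by rintro rfl; simp at hn
  have hd1 := natDegree_derivative_le p
  have hd2 := natDegree_derivative_le (derivative p)
  have hcard := (derivative p).card_roots'
  have hle := Multiset.toFinset_card_le (derivative p).roots
  have hp1 : derivative p ≠ 0 := by
    intro h
    simp [h] at hder
    omega
  have hp2 : derivative (derivative p) ≠ 0 := by
    intro h
    have := derivative_eq_zero.1 h
    omega
  have hH : Hk κ p ≠ 0 := Hk_ne_zero hκ hn
  have hnodup : (derivative p).roots.Nodup :=
    Multiset.toFinset_card_eq_card_iff_nodup.1 (by omega)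
  have hsimp1 : ∀ x, (derivative p).eval x = 0 → (derivative (derivative p)).eval x ≠ 0 := by
    intro x hx h
    have h1 := (one_lt_rootMultiplicity_iff_isRoot hp1).2 ⟨hx, h⟩
    have h2 := Multiset.nodup_iff_count_le_one.1 hnodup x
    rw [count_roots] at h2
    omega
  have hp01 : ∀ x, (derivative p).eval x = 0 → p.eval x ≠ 0 := by
    intro x hx h
    have h1 := (one_lt_rootMultiplicity_iff_isRoot hp).2 ⟨h, hx⟩
    have h2 := hsimple x h
    omega
  have hne : ∀ z, (Hk κ p).eval z = 0 → (derivative p).eval z ≠ 0 := by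
    intro z hz h
    rw [eval_Hk, h] at hz
    exact mul_ne_zero (hp01 z h) (hsimp1 z h) (by linarith)
  constructor
  · have hpH : p * Hk κ p ≠ 0 := mul_ne_zero hp hH
    have hgap := Finset.card_le_of_interleaved (s := (derivative p).roots.toFinset)
      (t := (p * Hk κ p).roots.toFinset) (by
        intro x hx y hy hxy hcons
        have mem : ∀ z, z ∈ (derivative p).roots.toFinset ↔ (derivative p).eval z = 0 := by
          intro z; simp [hp1]
        rw [mem] at hx hy
        obtain ⟨z, h1, h2, h3⟩ := exists_root_between_critical (κ := κ) hxy hx hy (hp01 x hx)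
          (hp01 y hy) (hsimp1 x hx) (hsimp1 y hy)
          (fun z h1 h2 h3 => hcons z ((mem z).2 h3) ⟨h1, h2⟩)
        exact ⟨z, by rw [Multiset.mem_toFinset, mem_roots hpH]; exact h3, h1, h2⟩)
    have h1 := Multiset.toFinset_card_le (p * Hk κ p).roots
    rw [roots_mul hpH, Multiset.card_add] at h1
    rw [roots_mul hpH] at hgap
    have h2 := Zcomplex_add_Zreal_le p
    unfold Zreal at h2 ⊢
    omega
  · have hsplit1 : (derivative p).Splits := splits_iff_card_roots.2 (by omega)
    -- By Rolle, the second derivative inherits real-rootedness from the first.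
    have hsplit2 : (derivative (derivative p)).Splits := by
      refine splits_iff_card_roots.2 ?_
      have h1 := card_roots_le_derivative (derivative p)
      have h2 := (derivative (derivative p)).card_roots'
      omega
    have hG : p * derivative (derivative p) ≠ 0 := mul_ne_zero hp hp2
    have h1 := card_roots_le_of_matches hH hG fun x hx =>
      rootMultiplicity_Hk_le hκ0 hκ (laguerre_of_splits hsplit2) hn hne hx
    rw [roots_mul hG, Multiset.card_add] at h1
    have h2 := (derivative (derivative p)).card_roots'
    unfold Zreal
    omega
end

section
/- Let n ≥ 2 and p(x) = x^{2n}/(2n) + x²/2 + 1. Then p has no real roots and the polynomial (2n−1)·(p')² − 2n·p·p'' has no real roots; in particular Z_ℝ((2n−1)(p')² − 2n·p·p'') + Z_ℝ(p) = 0, so p is a counterexample (of even degree 2n) to the conjecture that Z_ℝ((deg p − 1)(p')² − (deg p)·p·p'') + Z_ℝ(p) > 0 for all real polynomials of even degree. -/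
/-!
Write `y = x²` and `u = x^(2n-2) = y^(n-1)`. Clearing denominators, the terms in `u² y` cancel and
`(2n-1) p'² - 2n p p'' = (n-1) y (1 - (2n-3) u) - 2n(2n-1) u - 2n`.
If `y ≤ 1`, then `(n-1) y < 2n` makes this negative; if `y ≥ 1`, then `u ≥ 1`, so the first summand
is nonpositive because `2n - 3 ≥ 1`. Hence the polynomial is negative on all of `ℝ`, while `p ≥ 1`.
-/

open Polynomial

lemma Zreal_eq_zero_of_no_root {q : ℝ[X]} (h : ∀ x : ℝ, ¬ q.IsRoot x) : Zreal q = 0 := by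
  rw [Zreal, Multiset.card_eq_zero]
  exact Multiset.eq_zero_of_forall_notMem fun x hx => h x (isRoot_of_mem_roots hx)

theorem stmt7 (n : ℕ) (hn : 2 ≤ n)
    (p : ℝ[X]) (hp : p = C (1 / (2 * (n : ℝ))) * X ^ (2 * n) + C (1 / 2) * X ^ 2 + 1) :
    (∀ x : ℝ, ¬ p.IsRoot x) ∧
    (∀ x : ℝ, ¬ (C (2 * (n : ℝ) - 1) * (derivative p) ^ 2 -
        C (2 * (n : ℝ)) * (p * derivative (derivative p))).IsRoot x) ∧
    Zreal (C (2 * (n : ℝ) - 1) * (derivative p) ^ 2 -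
        C (2 * (n : ℝ)) * (p * derivative (derivative p))) + Zreal p = 0 := by
  have hp_root : ∀ x : ℝ, ¬ p.IsRoot x := by
    intro x hx
    have h0 : 0 ≤ 1 / (2 * (n : ℝ)) * x ^ (2 * n) :=
      mul_nonneg (by positivity) ((even_two_mul n).pow_nonneg x)
    simp only [hp, IsRoot.def, eval_add, eval_mul, eval_C, eval_pow, eval_X, eval_one] at hx
    nlinarith [sq_nonneg x]
  have hH_root : ∀ x : ℝ, ¬ (C (2 * (n : ℝ) - 1) * (derivative p) ^ 2 -
      C (2 * (n : ℝ)) * (p * derivative (derivative p))).IsRoot x := by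
    -- With `n = m + 2` no exponent involves truncated subtraction.
    obtain ⟨m, rfl⟩ := Nat.exists_eq_add_of_le' hn
    have hm : (0 : ℝ) ≤ m := m.cast_nonneg
    have hc : (m : ℝ) + 2 ≠ 0 := by positivity
    have hd : derivative p = X ^ (2 * m + 3) + X := by
      rw [hp]
      simp only [derivative_add, derivative_C_mul, derivative_X_pow, derivative_one]
      rw [show 2 * (m + 2) - 1 = 2 * m + 3 by omega, ← mul_assoc, ← mul_assoc, ← C_mul, ← C_mul]
      have h1 : 1 / (2 * ((m + 2 : ℕ) : ℝ)) * ((2 * (m + 2) : ℕ) : ℝ) = 1 := by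
        push_cast
        field_simp
      have h2 : (1 / 2 : ℝ) * ((2 : ℕ) : ℝ) = 1 := by norm_num
      rw [h1, h2]
      simp
    have hdd : derivative (derivative p) = C (2 * (m : ℝ) + 3) * X ^ (2 * m + 2) + 1 := by
      rw [hd]
      have h3 : (C 2 : ℝ[X]) + 1 = C 3 := by rw [← C_1, ← C_add]; norm_num
      simp [← h3, add_assoc]
    intro x hx
    rw [hdd, hd, hp] at hx
    simp only [IsRoot.def, eval_sub, eval_add, eval_mul, eval_C, eval_pow, eval_X, eval_one] at hx
    set y := x ^ 2 with hy
    set u := y ^ (m + 1) with hu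
    have hy0 : 0 ≤ y := sq_nonneg x
    have hu0 : 0 ≤ u := pow_nonneg hy0 _
    have e2 : x ^ (2 * m + 2) = u := by rw [hu, hy]; ring
    have e3 : x ^ (2 * m + 3) = u * x := by rw [hu, hy]; ring
    have e4 : x ^ (2 * (m + 2)) = u * y := by rw [hu, hy]; ring
    rw [e2, e3, e4] at hx
    push_cast at hx
    have key : ((m : ℝ) + 1) * y * (1 - (2 * m + 1) * u)
        - 2 * (m + 2) * (2 * m + 3) * u - 2 * (m + 2) = 0 := by
      rw [← hx]
      field_simp
      rw [hy]
      ring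
    have hA : 0 ≤ 2 * ((m : ℝ) + 2) * (2 * m + 3) * u := by positivity
    rcases le_total y 1 with h | h
    · have h1 : 0 ≤ ((m : ℝ) + 1) * y * ((2 * m + 1) * u) := by positivity
      have h2 : ((m : ℝ) + 1) * y ≤ m + 1 := mul_le_of_le_one_right (by positivity) h
      linarith
    · have hu1 : 1 ≤ u := one_le_pow₀ h
      have h1 : 1 - (2 * (m : ℝ) + 1) * u ≤ 0 := by nlinarith
      have h2 : ((m : ℝ) + 1) * y * (1 - (2 * m + 1) * u) ≤ 0 :=
        mul_nonpos_of_nonneg_of_nonpos (by positivity) h1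
      linarith
  exact ⟨hp_root, hH_root, by
    rw [Zreal_eq_zero_of_no_root hH_root, Zreal_eq_zero_of_no_root hp_root]⟩
end

section
/- Let p be a real polynomial and κ ∈ ℝ with κ ≠ 0. Then the following two polynomial identities hold: (H_κ[p])′ · p′ − H_{2−1/κ}[p′] · p = ((2κ−1)/κ) · H_κ[p] · p″, and (H_κ[p])′ · p″ − κ · H_{2−1/κ}[p′] · p′ = H_κ[p] · p‴, where H_{2−1/κ}[p′] = (2 − 1/κ)·(p″)² − p′·p‴. -/
open Polynomial

theorem stmt10 (p : ℝ[X]) (κ : ℝ) (hκ : κ ≠ 0) :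
    derivative (Hk κ p) * derivative p - Hk (2 - 1 / κ) (derivative p) * p =
      C ((2 * κ - 1) / κ) * Hk κ p * derivative (derivative p) ∧
    derivative (Hk κ p) * derivative (derivative p) -
        C κ * Hk (2 - 1 / κ) (derivative p) * derivative p =
      Hk κ p * derivative (derivative (derivative p)) := by
  -- Both identities are ring identities in `p`, its derivatives and `κ, κ⁻¹`,
  -- modulo the single relation `κ * κ⁻¹ = 1`.
  have hc : (C κ : ℝ[X]) * C κ⁻¹ = 1 := by rw [← C_mul, mul_inv_cancel₀ hκ, C_1]
  have h1 : (C (2 - 1 / κ) : ℝ[X]) = 2 - C κ⁻¹ := by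
    rw [one_div, C_sub, C_ofNat]
  have h2 : (2 * κ - 1) / κ = 2 - 1 / κ := by field_simp
  have hd : derivative (Hk κ p) =
      (2 * C κ - 1) * derivative p * derivative (derivative p) -
        p * derivative (derivative (derivative p)) := by
    simp only [Hk, derivative_sub, derivative_mul, derivative_C, pow_two]
    ring
  rw [hd, h2]
  simp only [Hk, h1]
  constructor
  · linear_combination (derivative p ^ 2 * derivative (derivative p)) * hc
  · linear_combination (derivative p * derivative (derivative p) ^ 2) * hc
end

section
/- Let p be a real polynomial, κ ∈ ℝ with κ ≠ 0, and a < b real numbers such that H_κ[p](a) = H_κ[p](b) = 0 and H_κ[p](x) ≠ 0 for all x ∈ (a, b). Then: (i) if p(x) ≠ 0 and p′(x) ≠ 0 for all x ∈ [a, b], there exists y ∈ (a, b) with H_{2−1/κ}[p′](y) = 0; (ii) if p′(x) ≠ 0 and p″(x) ≠ 0 for all x ∈ [a, b], there exists y ∈ (a, b) with H_{2−1/κ}[p′](y) = 0. -/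
open Polynomial

/-!
Write `H = Hk κ p` and `G = Hk (2 - 1/κ) p'`. The proof rests on the identity
`κ p' H' - (2κ - 1) p'' H = κ p G`. Its left side is, up to a nonvanishing factor, the derivative
of `H / |p'| ^ ((2κ - 1)/κ)`, which vanishes at `a` and `b`; by Rolle's theorem `p G` has a zero
in `(a, b)`, and so has `G` when `p` has no zero there. This is part (i).

For part (ii) it remains to see that `p` has no zero on `[a, b]`. Since `p p'' = κ p'²` at both
endpoints and `p''` has constant sign, `p a` and `p b` have the same sign; as `p` is strictly
monotone, it cannot vanish in between.
-/

theorem eval_mul_eval_pos {q : ℝ[X]} {a b : ℝ} (h : ∀ x ∈ Set.Icc a b, q.eval x ≠ 0)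
    {x y : ℝ} (hx : x ∈ Set.Icc a b) (hy : y ∈ Set.Icc a b) : 0 < q.eval x * q.eval y := by
  by_contra! hneg
  have hc : IsPreconnected ((fun t => q.eval t) '' Set.Icc a b) :=
    isPreconnected_Icc.image _ q.continuous.continuousOn
  have h0 : (0 : ℝ) ∈ (fun t => q.eval t) '' Set.Icc a b := by
    rcases mul_nonpos_iff.mp hneg with ⟨h1, h2⟩ | ⟨h1, h2⟩
    · exact hc.ordConnected.out ⟨y, hy, rfl⟩ ⟨x, hx, rfl⟩ ⟨h2, h1⟩
    · exact hc.ordConnected.out ⟨x, hx, rfl⟩ ⟨y, hy, rfl⟩ ⟨h1, h2⟩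
  obtain ⟨t, ht, h0⟩ := h0
  exact h t ht h0

/-- Rolle's theorem for `H / |q| ^ s`. -/
theorem exists_eval_eq_of_rolle {H q : ℝ[X]} (s : ℝ) {a b : ℝ} (hab : a < b)
    (ha : H.eval a = 0) (hb : H.eval b = 0) (hq : ∀ x ∈ Set.Icc a b, q.eval x ≠ 0) :
    ∃ y ∈ Set.Ioo a b,
      q.eval y * (derivative H).eval y = s * (derivative q).eval y * H.eval y := by
  -- `Real.log` is `log |·|`, so `exp (-s * log q)` is `|q| ^ (-s)` whatever the sign of `q`.
  have hd : ∀ x ∈ Set.Icc a b, HasDerivAt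
      (fun t => H.eval t * Real.exp (-s * Real.log (q.eval t)))
      ((derivative H).eval x * Real.exp (-s * Real.log (q.eval x)) +
        H.eval x * (Real.exp (-s * Real.log (q.eval x)) *
          (-s * ((derivative q).eval x / q.eval x)))) x := fun x hx =>
    (H.hasDerivAt x).mul ((((q.hasDerivAt x).log (hq x hx)).const_mul (-s)).exp)
  obtain ⟨y, hy, h⟩ := exists_hasDerivAt_eq_zero hab
    (fun x hx => (hd x hx).continuousAt.continuousWithinAt) (by simp [ha, hb])
    (fun x hx => hd x (Set.Ioo_subset_Icc_self hx))
  refine ⟨y, hy, ?_⟩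
  have hqy := hq y (Set.Ioo_subset_Icc_self hy)
  have h' : Real.exp (-s * Real.log (q.eval y)) * ((derivative H).eval y -
      s * ((derivative q).eval y / q.eval y) * H.eval y) = 0 := by
    linear_combination h
  have h2 := (mul_eq_zero.mp h').resolve_left (Real.exp_ne_zero _)
  field_simp at h2
  linear_combination h2

theorem Hk_identity (p : ℝ[X]) {κ : ℝ} (hκ : κ ≠ 0) (x : ℝ) :
    (derivative p).eval x * (derivative (Hk κ p)).eval x
      - (2 * κ - 1) / κ * (derivative (derivative p)).eval x * (Hk κ p).eval x
      = p.eval x * (Hk (2 - 1 / κ) (derivative p)).eval x := by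
  simp only [Hk, derivative_sub, derivative_mul, derivative_C, derivative_pow, eval_sub, eval_mul,
    eval_add, eval_pow, eval_C, eval_zero]
  simp
  field_simp
  ring

theorem exists_Hk_derivative_eq_zero {p : ℝ[X]} {κ : ℝ} (hκ : κ ≠ 0) {a b : ℝ} (hab : a < b)
    (ha : (Hk κ p).eval a = 0) (hb : (Hk κ p).eval b = 0)
    (hp : ∀ x ∈ Set.Icc a b, p.eval x ≠ 0)
    (hp' : ∀ x ∈ Set.Icc a b, (derivative p).eval x ≠ 0) :
    ∃ y ∈ Set.Ioo a b, (Hk (2 - 1 / κ) (derivative p)).eval y = 0 := by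
  obtain ⟨y, hy, h⟩ := exists_eval_eq_of_rolle ((2 * κ - 1) / κ) hab ha hb hp'
  refine ⟨y, hy, ?_⟩
  have h2 := Hk_identity p hκ y
  rw [sub_eq_zero.mpr h] at h2
  exact (mul_eq_zero.mp h2.symm).resolve_left (hp y (Set.Ioo_subset_Icc_self hy))

theorem eval_ne_zero_of_Hk_endpoints {p : ℝ[X]} {κ : ℝ} (hκ : κ ≠ 0) {a b : ℝ} (hab : a < b)
    (ha : (Hk κ p).eval a = 0) (hb : (Hk κ p).eval b = 0)
    (hp' : ∀ x ∈ Set.Icc a b, (derivative p).eval x ≠ 0)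
    (hp'' : ∀ x ∈ Set.Icc a b, (derivative (derivative p)).eval x ≠ 0) :
    ∀ x ∈ Set.Icc a b, p.eval x ≠ 0 := by
  have haI := Set.left_mem_Icc.mpr hab.le
  have hbI := Set.right_mem_Icc.mpr hab.le
  simp only [Hk, eval_sub, eval_mul, eval_pow, eval_C] at ha hb
  have hpos : 0 < p.eval a * p.eval b := by
    have h2 := eval_mul_eval_pos hp'' haI hbI
    refine pos_of_mul_pos_left (b := (derivative (derivative p)).eval a *
      (derivative (derivative p)).eval b) ?_ h2.le
    have : p.eval a * p.eval b * ((derivative (derivative p)).eval a *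
        (derivative (derivative p)).eval b) =
        (κ * ((derivative p).eval a * (derivative p).eval b)) ^ 2 := by
      linear_combination (-(p.eval b * (derivative (derivative p)).eval b)) * ha
        - κ * (derivative p).eval a ^ 2 * hb
    rw [this]
    have := hp' a haI
    have := hp' b hbI
    positivity
  intro c hc h0
  have hac : a < c := lt_of_le_of_ne hc.1 (by rintro rfl; simp [h0] at hpos)
  have hcb : c < b := lt_of_le_of_ne hc.2 (by rintro rfl; simp [h0] at hpos)
  obtain ⟨u, hu, hu'⟩ := exists_hasDerivAt_eq_slope (fun t => p.eval t) _ hac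
    p.continuous.continuousOn (fun x _ => p.hasDerivAt x)
  obtain ⟨v, hv, hv'⟩ := exists_hasDerivAt_eq_slope (fun t => p.eval t) _ hcb
    p.continuous.continuousOn (fun x _ => p.hasDerivAt x)
  have hsign := eval_mul_eval_pos hp' (x := u) (y := v)
    ⟨hu.1.le, (hu.2.trans hcb).le⟩ ⟨(hac.trans hv.1).le, hv.2.le⟩
  have h1 : 0 < c - a := sub_pos.mpr hac
  have h2 : 0 < b - c := sub_pos.mpr hcb
  rw [eq_div_iff h1.ne', h0] at hu'
  rw [eq_div_iff h2.ne', h0] at hv'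
  have h3 := mul_pos hsign (mul_pos h1 h2)
  have h4 : (derivative p).eval u * (derivative p).eval v * ((c - a) * (b - c))
      = -(p.eval a * p.eval b) := by
    linear_combination (derivative p).eval v * (b - c) * hu' - p.eval a * hv'
  linarith

theorem stmt11 (p : ℝ[X]) (κ : ℝ) (hκ : κ ≠ 0) (a b : ℝ) (hab : a < b)
    (ha : (Hk κ p).eval a = 0) (hb : (Hk κ p).eval b = 0)
    (hmid : ∀ x ∈ Set.Ioo a b, (Hk κ p).eval x ≠ 0) :
    ((∀ x ∈ Set.Icc a b, p.eval x ≠ 0 ∧ (derivative p).eval x ≠ 0) →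
      ∃ y ∈ Set.Ioo a b, (Hk (2 - 1 / κ) (derivative p)).eval y = 0) ∧
    ((∀ x ∈ Set.Icc a b,
        (derivative p).eval x ≠ 0 ∧ (derivative (derivative p)).eval x ≠ 0) →
      ∃ y ∈ Set.Ioo a b, (Hk (2 - 1 / κ) (derivative p)).eval y = 0) := by
  exact ⟨fun h => exists_Hk_derivative_eq_zero hκ hab ha hb (fun x hx => (h x hx).1)
      fun x hx => (h x hx).2,
    fun h => exists_Hk_derivative_eq_zero hκ hab ha hb
      (eval_ne_zero_of_Hk_endpoints hκ hab ha hb (fun x hx => (h x hx).1) fun x hx => (h x hx).2)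
      fun x hx => (h x hx).1⟩
end

section
/- Let p be a real polynomial, κ ∈ ℝ with κ ≠ 0, and a < b real numbers. Assume H_κ[p] is not the zero polynomial and that either (p(x) ≠ 0 and p′(x) ≠ 0 for all x ∈ [a, b]) or (p′(x) ≠ 0 and p″(x) ≠ 0 for all x ∈ [a, b]). Then Z_{(a,b)}(H_κ[p]) ≤ Z_{(a,b)}(H_{2−1/κ}[p′]) + 1, where Z_{(a,b)}(q) is the number of roots of q in the open interval (a, b) counted with multiplicity. -/
/-!
Write `H = H_κ[p]`, `G = H_{2-1/κ}[p']` and `c = 2 - 1/κ`. Two polynomial identities carry the proof: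
`p' H' - c p'' H = p G` and `p'' H' - p''' H = κ p' G`.
Both have the shape `q H' - s q' H = u G`, i.e. `(H |q|^{-s})' = |q|^{-s} u G / q`, with `q` and `u`
free of zeros on the interval: the first applies when `p p' ≠ 0`, the second when `p' p'' ≠ 0`.
Rolle's theorem applied to `H |q|^{-s}` gives a root of `G` strictly between any two distinct roots of
`H`, and a root of `H` of multiplicity `m` is a root of `G` of multiplicity at least `m - 1`.
Adding up gives `Z(H) ≤ Z(G) + 1`. If `G = 0`, then `H |q|^{-s}` is locally constant and `H`, being
nonzero, has no root in the interval (shown below through multiplicities).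
-/

open Polynomial

/-- Rolle's theorem for `H |q|^{-s}`, where `|q|^{-s}` is written as `exp (-s log q)`;
`Real.log` is `log |·|`, so no sign of `q` is needed. -/
lemma exists_root_between_s12 (H q : ℝ[X]) (s x y : ℝ) (hxy : x < y)
    (hq : ∀ z ∈ Set.Icc x y, q.eval z ≠ 0) (hx : H.eval x = 0) (hy : H.eval y = 0) :
    ∃ z ∈ Set.Ioo x y, (q * derivative H - C s * derivative q * H).eval z = 0 := by
  have hd : ∀ z ∈ Set.Icc x y,
      HasDerivAt (fun z => H.eval z * Real.exp (-s * Real.log (q.eval z)))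
        ((derivative H).eval z * Real.exp (-s * Real.log (q.eval z)) +
          H.eval z * (Real.exp (-s * Real.log (q.eval z)) *
            (-s * ((derivative q).eval z / q.eval z)))) z := fun z hz =>
    (H.hasDerivAt z).mul ((((q.hasDerivAt z).log (hq z hz)).const_mul (-s)).exp)
  obtain ⟨z, hz, h0⟩ := exists_hasDerivAt_eq_zero hxy
    (fun z hz => (hd z hz).continuousAt.continuousWithinAt) (by simp [hx, hy])
    (fun z hz => hd z (Set.Ioo_subset_Icc_self hz))
  refine ⟨z, hz, ?_⟩
  have hqz := hq z (Set.Ioo_subset_Icc_self hz)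
  have he := Real.exp_ne_zero (-s * Real.log (q.eval z))
  simp only [eval_sub, eval_mul, eval_C]
  refine mul_left_cancel₀ he ?_
  generalize Real.exp (-s * Real.log (q.eval z)) = e at h0
  rw [mul_zero]
  have h1 : (derivative q).eval z / q.eval z * q.eval z = (derivative q).eval z :=
    div_mul_cancel₀ _ hqz
  linear_combination q.eval z * h0 + s * e * H.eval z * h1

lemma pow_sub_one_dvd_derivative (H : ℝ[X]) (x : ℝ) :
    (X - C x) ^ (H.rootMultiplicity x - 1) ∣ derivative H := by
  by_cases h : derivative H = 0
  · simp [h]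
  · exact (le_rootMultiplicity_iff h).1
      (rootMultiplicity_sub_one_le_derivative_rootMultiplicity H x)

/-- The case `G = 0`: at a root of `H` of multiplicity `m ≥ 1` the two sides would vanish to the
different orders `m - 1` and at least `m`. -/
lemma eval_ne_zero_of_wronskian_eq_zero (H q : ℝ[X]) (s x : ℝ) (hH : H ≠ 0)
    (hq : q.eval x ≠ 0) (h : q * derivative H - C s * derivative q * H = 0) :
    H.eval x ≠ 0 := by
  intro hx
  have hd0 : derivative H ≠ 0 := by
    intro h0
    rw [eq_C_of_derivative_eq_zero h0] at hx hH
    simp_all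
  have hdvd : (X - C x) ^ H.rootMultiplicity x ∣ q * derivative H := by
    rw [sub_eq_zero.1 h]
    exact (pow_rootMultiplicity_dvd H x).mul_left _
  have hcop : IsCoprime ((X - C x) ^ H.rootMultiplicity x) q := by
    refine IsCoprime.pow_left ((irreducible_X_sub_C x).coprime_iff_not_dvd.2 ?_)
    rwa [dvd_iff_isRoot]
  have h1 := (le_rootMultiplicity_iff hd0).2 (hcop.dvd_of_dvd_mul_left hdvd)
  rw [derivative_rootMultiplicity_of_root hx] at h1
  have := (rootMultiplicity_pos hH).2 hx
  omega

/-- The common core of both cases: an identity `q H' - s q' H = u G` with `q`, `u` free of zeros on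
`I = (a, b)` bounds the number of roots of `H` in `I` by that of `G` plus one. -/
lemma ZIcount_le_of_identity (H G q u : ℝ[X]) (s a b : ℝ) (hH : H ≠ 0)
    (hq : ∀ x ∈ Set.Ioo a b, q.eval x ≠ 0) (hu : ∀ x ∈ Set.Ioo a b, u.eval x ≠ 0)
    (h : q * derivative H - C s * derivative q * H = u * G) :
    ZIcount (Set.Ioo a b) H ≤ ZIcount (Set.Ioo a b) G + 1 := by
  classical
  -- `ZIcount` filters with the classical decidability instance of membership.
  have hZ : ∀ r : ℝ[X], ZIcount (Set.Ioo a b) r =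
      Multiset.card (r.roots.filter (fun x => x ∈ Set.Ioo a b)) := fun r => by
    unfold ZIcount
    congr
  rw [hZ, hZ]
  set M := H.roots.filter (fun x => x ∈ Set.Ioo a b) with hM
  set N := G.roots.filter (fun x => x ∈ Set.Ioo a b) with hN
  have memM : ∀ x, x ∈ M.toFinset ↔ H.eval x = 0 ∧ x ∈ Set.Ioo a b := by
    intro x
    rw [Multiset.mem_toFinset, hM, Multiset.mem_filter, mem_roots hH, IsRoot]
  by_cases hG : G = 0
  · have : M = 0 := by
      refine Multiset.eq_zero_of_forall_notMem fun x hx => ?_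
      obtain ⟨h1, h2⟩ := (memM x).1 (Multiset.mem_toFinset.2 hx)
      exact eval_ne_zero_of_wronskian_eq_zero H q s x hH (hq x h2) (by rw [h, hG, mul_zero]) h1
    rw [this, Multiset.card_zero]
    exact Nat.zero_le _
  have memN : ∀ x, x ∈ N.toFinset ↔ G.eval x = 0 ∧ x ∈ Set.Ioo a b := by
    intro x
    rw [Multiset.mem_toFinset, hN, Multiset.mem_filter, mem_roots hG, IsRoot]
  have hmult : ∀ x ∈ M.toFinset, M.count x - 1 ≤ N.count x := by
    intro x hx
    obtain ⟨-, hxI⟩ := (memM x).1 hx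
    rw [hM, hN, Multiset.count_filter_of_pos hxI, Multiset.count_filter_of_pos hxI,
      count_roots, count_roots, le_rootMultiplicity_iff hG]
    have hcop : IsCoprime ((X - C x) ^ (H.rootMultiplicity x - 1)) u := by
      refine IsCoprime.pow_left ((irreducible_X_sub_C x).coprime_iff_not_dvd.2 ?_)
      rw [dvd_iff_isRoot]
      exact hu x hxI
    refine hcop.dvd_of_dvd_mul_left ?_
    rw [← h]
    exact dvd_sub ((pow_sub_one_dvd_derivative H x).mul_left _)
      (((pow_dvd_pow _ (Nat.sub_le _ _)).trans (pow_rootMultiplicity_dvd H x)).mul_left _)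
  have hcard : M.toFinset.card ≤ (N.toFinset \ M.toFinset).card + 1 := by
    refine Finset.card_le_sdiff_of_interleaved fun x hx y hy hxy _ => ?_
    obtain ⟨hx0, hxI⟩ := (memM x).1 hx
    obtain ⟨hy0, hyI⟩ := (memM y).1 hy
    have hsub : Set.Icc x y ⊆ Set.Ioo a b := Set.Icc_subset_Ioo hxI.1 hyI.2
    obtain ⟨z, hz, h0⟩ := exists_root_between_s12 H q s x y hxy (fun z hz => hq z (hsub hz)) hx0 hy0
    have hzI := hsub (Set.Ioo_subset_Icc_self hz)
    rw [h, eval_mul] at h0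
    exact ⟨z, (memN z).2 ⟨(mul_eq_zero.1 h0).resolve_left (hu z hzI), hzI⟩, hz.1, hz.2⟩
  calc
    Multiset.card M = ∑ x ∈ M.toFinset, M.count x := (Multiset.toFinset_sum_count_eq _).symm
    _ = ∑ x ∈ M.toFinset, (M.count x - 1 + 1) :=
      Eq.symm <| Finset.sum_congr rfl fun _ hx => tsub_add_cancel_of_le <|
        Nat.succ_le_iff.2 <| Multiset.count_pos.2 <| Multiset.mem_toFinset.1 hx
    _ = (∑ x ∈ M.toFinset, (M.count x - 1)) + M.toFinset.card := by
      simp only [Finset.sum_add_distrib, Finset.card_eq_sum_ones]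
    _ ≤ (∑ x ∈ M.toFinset, N.count x) + ((N.toFinset \ M.toFinset).card + 1) :=
      add_le_add (Finset.sum_le_sum hmult) hcard
    _ ≤ (∑ x ∈ M.toFinset, N.count x) + ((∑ x ∈ N.toFinset \ M.toFinset, N.count x) + 1) := by
      simp only [Finset.card_eq_sum_ones]
      gcongr with x hx
      rw [Nat.succ_le_iff, Multiset.count_pos, ← Multiset.mem_toFinset]
      exact (Finset.mem_sdiff.1 hx).1
    _ = Multiset.card N + 1 := by
      rw [← add_assoc, ← Finset.sum_union Finset.disjoint_sdiff, Finset.union_sdiff_self_eq_union,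
        ← Multiset.toFinset_sum_count_eq N, ← Finset.sum_subset Finset.subset_union_right]
      intro x _ hx₂
      simpa only [Multiset.mem_toFinset, Multiset.count_eq_zero] using hx₂

lemma derivative_Hk (κ : ℝ) (p : ℝ[X]) :
    derivative (Hk κ p) = (2 * C κ - 1) * derivative p * derivative (derivative p) -
      p * derivative (derivative (derivative p)) := by
  simp only [Hk, derivative_sub, derivative_mul, derivative_C, derivative_pow]
  have h2 : (C 2 : ℝ[X]) = 2 := rfl
  simp [h2]
  ring

lemma Hk_identity_left (κ : ℝ) (hκ : κ ≠ 0) (p : ℝ[X]) :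
    derivative p * derivative (Hk κ p) -
      C (2 - 1 / κ) * derivative (derivative p) * Hk κ p =
      p * Hk (2 - 1 / κ) (derivative p) := by
  have hc : C κ * C (2 - 1 / κ) = 2 * C κ - 1 := by
    rw [← C_mul, mul_sub, mul_one_div_cancel hκ, C_sub, C_mul, C_1, mul_comm]
    rfl
  rw [derivative_Hk, Hk, Hk]
  linear_combination (-(derivative p) ^ 2 * derivative (derivative p)) * hc

lemma Hk_identity_right (κ : ℝ) (hκ : κ ≠ 0) (p : ℝ[X]) :
    derivative (derivative p) * derivative (Hk κ p) -
      C 1 * derivative (derivative (derivative p)) * Hk κ p =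
      (C κ * derivative p) * Hk (2 - 1 / κ) (derivative p) := by
  have hc : C κ * C (2 - 1 / κ) = 2 * C κ - 1 := by
    rw [← C_mul, mul_sub, mul_one_div_cancel hκ, C_sub, C_mul, C_1, mul_comm]
    rfl
  rw [derivative_Hk, Hk, Hk, C_1]
  linear_combination (-(derivative p) * derivative (derivative p) ^ 2) * hc

theorem stmt12 (p : ℝ[X]) (κ : ℝ) (hκ : κ ≠ 0) (a b : ℝ) (hab : a < b)
    (hH : Hk κ p ≠ 0)
    (hcond : (∀ x ∈ Set.Icc a b, p.eval x ≠ 0 ∧ (derivative p).eval x ≠ 0) ∨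
      (∀ x ∈ Set.Icc a b,
        (derivative p).eval x ≠ 0 ∧ (derivative (derivative p)).eval x ≠ 0)) :
    ZIcount (Set.Ioo a b) (Hk κ p) ≤
      ZIcount (Set.Ioo a b) (Hk (2 - 1 / κ) (derivative p)) + 1 := by
  rcases hcond with h | h
  · exact ZIcount_le_of_identity _ _ _ _ _ a b hH
      (fun x hx => (h x (Set.Ioo_subset_Icc_self hx)).2)
      (fun x hx => (h x (Set.Ioo_subset_Icc_self hx)).1) (Hk_identity_left κ hκ p)
  · refine ZIcount_le_of_identity _ _ _ _ _ a b hH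
      (fun x hx => (h x (Set.Ioo_subset_Icc_self hx)).2) (fun x hx => ?_)
      (Hk_identity_right κ hκ p)
    rw [eval_mul, eval_C]
    exact mul_ne_zero hκ (h x (Set.Ioo_subset_Icc_self hx)).1
end

section
/- Let m ≥ 2 and 1 ≤ s ≤ m − 1 be integers, and let a₁, …, a_m be strictly positive real numbers. Then (a₁ + ⋯ + a_s − a_{s+1} − ⋯ − a_m)² < max(s, m − s) · (a₁² + ⋯ + a_m²). Moreover, for nonnegative a₁, …, a_m the non-strict inequalities hold: 2·∑_{1 ≤ j < k ≤ m} a_j a_k ≤ (m − 1)·∑_{k=1}^m a_k² and (∑_{k=1}^m a_k)² ≤ m·∑_{k=1}^m a_k². -/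
/-!
Write `P` and `N` for the sums over `i < s` and `s ≤ i < m`. Both are positive, so
`(P - N)² = P² + N² - 2PN < P² + N²`, and Cauchy–Schwarz on each block bounds `P²` and `N²` by the
block length times the block's sum of squares; both lengths are at most `max s (m - s)`.
The last inequality is Cauchy–Schwarz on all of `range m`, and expanding the square there
(`sq_sum_range_eq`) turns it into the bound on the sum over pairs.
-/

open Polynomial

lemma sq_sum_range_eq (a : ℕ → ℝ) (m : ℕ) :
    (∑ k ∈ Finset.range m, a k) ^ 2 = ∑ k ∈ Finset.range m, a k ^ 2 +
      2 * ∑ k ∈ Finset.range m, ∑ j ∈ Finset.range k, a j * a k := by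
  induction m with
  | zero => simp
  | succ n ih =>
    simp only [Finset.sum_range_succ _ n, ← Finset.sum_mul] at ih ⊢
    linear_combination ih

theorem stmt13 (m s : ℕ) (hm : 2 ≤ m) (hs1 : 1 ≤ s) (hs2 : s ≤ m - 1) (a : ℕ → ℝ) :
    ((∀ i < m, 0 < a i) →
      (∑ i ∈ Finset.range s, a i - ∑ i ∈ Finset.Ico s m, a i) ^ 2 <
        (max s (m - s) : ℝ) * ∑ i ∈ Finset.range m, a i ^ 2) ∧
    ((∀ i < m, 0 ≤ a i) →
      2 * ∑ k ∈ Finset.range m, ∑ j ∈ Finset.range k, a j * a k ≤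
          ((m : ℝ) - 1) * ∑ k ∈ Finset.range m, a k ^ 2 ∧
        (∑ k ∈ Finset.range m, a k) ^ 2 ≤ (m : ℝ) * ∑ k ∈ Finset.range m, a k ^ 2) := by
  have hsm : s < m := by omega
  constructor
  · intro ha
    have hP : 0 < ∑ i ∈ Finset.range s, a i :=
      Finset.sum_pos (fun i hi => ha i ((Finset.mem_range.1 hi).trans hsm))
        (Finset.nonempty_range_iff.2 (by omega))
    have hN : 0 < ∑ i ∈ Finset.Ico s m, a i :=
      Finset.sum_pos (fun i hi => ha i (Finset.mem_Ico.1 hi).2) (Finset.nonempty_Ico.2 hsm)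
    have hPsq := sq_sum_le_card_mul_sum_sq (s := Finset.range s) (f := a)
    have hNsq := sq_sum_le_card_mul_sum_sq (s := Finset.Ico s m) (f := a)
    rw [Finset.card_range] at hPsq
    rw [Nat.card_Ico, Nat.cast_sub hsm.le] at hNsq
    rw [← Finset.sum_range_add_sum_Ico (fun i => a i ^ 2) hsm.le, mul_add]
    have hA : 0 ≤ ∑ i ∈ Finset.range s, a i ^ 2 := Finset.sum_nonneg fun i _ => sq_nonneg _
    have hB : 0 ≤ ∑ i ∈ Finset.Ico s m, a i ^ 2 := Finset.sum_nonneg fun i _ => sq_nonneg _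
    have hA' := mul_le_mul_of_nonneg_right (le_max_left (s : ℝ) (m - s)) hA
    have hB' := mul_le_mul_of_nonneg_right (le_max_right (s : ℝ) (m - s)) hB
    linarith [mul_pos hP hN, sub_sq (∑ i ∈ Finset.range s, a i) (∑ i ∈ Finset.Ico s m, a i)]
  · intro _
    have h := sq_sum_le_card_mul_sum_sq (s := Finset.range m) (f := a)
    rw [Finset.card_range] at h
    refine ⟨?_, h⟩
    linarith [sq_sum_range_eq a m]
end

section
/- Let p be a real polynomial of degree n all of whose zeros are real and simple, and let ξ₁ < ξ₂ < ⋯ < ξ_{n−1} be the (real, simple) zeros of p′. Then for every integer s with 2 ≤ s ≤ ⌊(n+1)/2⌋ and every x ∈ (ξ_{s−1}, ξ_s) ∪ (ξ_{n−s}, ξ_{n−s+1}), one has p(x)·p″(x) < ((n−s)/(n−s+1)) · (p′(x))². -/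
/-!
Write `L(x) = ∑ 1/(x - a)` and `S(x) = ∑ 1/(x - a)²`, summed over the zeros `a` of `p`. Where
`p(x) ≠ 0` one has `p' = p L` and `p p'' - p'² = -p² S` (`eval_derivative_prod_X_sub_C`), so with
`m = n - s + 1` the claim `p p'' < (1 - 1/m) p'²` is equivalent to `L² < m S`.

By Rolle, the zeros of `p` on one side of `x` exceed in number the critical points on that side by
at most one (`card_roots_filter_le`). For `x` in either of the two intervals this leaves at most `m`
zeros on each side, and since `m < n` neither side is empty. Splitting `L = P - N` into the
contributions of the two sides, Cauchy-Schwarz gives `P² + N² ≤ m S`, while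
`(P - N)² < P² + N²` (`sq_sum_lt`). At a zero of `p` the claim reduces to `p'(x) ≠ 0`.
-/

open Polynomial

/-- For `q = ∏ (X - a)`: `q' = q ∑ 1/(x - a)` and `q q'' - q'² = -q² ∑ 1/(x - a)²` at a point `x`
which is not a zero. -/
lemma eval_derivative_prod_X_sub_C (A : Finset ℝ) (x : ℝ) (hx : x ∉ A) :
    (derivative (∏ a ∈ A, (X - C a))).eval x =
        (∏ a ∈ A, (X - C a)).eval x * ∑ a ∈ A, (x - a)⁻¹ ∧
      (∏ a ∈ A, (X - C a)).eval x * (derivative (derivative (∏ a ∈ A, (X - C a)))).eval x -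
        (derivative (∏ a ∈ A, (X - C a))).eval x ^ 2 =
        -(∏ a ∈ A, (X - C a)).eval x ^ 2 * ∑ a ∈ A, (x - a)⁻¹ ^ 2 := by
  induction A using Finset.induction_on with
  | empty => simp
  | insert b A hb ih =>
    rw [Finset.mem_insert, not_or] at hx
    obtain ⟨h1, h2⟩ := ih hx.2
    have hxb : x - b ≠ 0 := sub_ne_zero.mpr hx.1
    rw [Finset.prod_insert hb, Finset.sum_insert hb, Finset.sum_insert hb]
    generalize (∏ a ∈ A, (X - C a)) = r at h1 h2 ⊢
    simp only [derivative_mul, derivative_sub, derivative_X, derivative_C, derivative_add,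
      eval_add, eval_mul, eval_sub, eval_X, eval_C, sub_zero, one_mul]
    constructor
    · rw [h1]
      field_simp
    · have h3 : (x - b) ^ 2 * (x - b)⁻¹ ^ 2 = 1 := by field_simp
      linear_combination (x - b) ^ 2 * h2 + r.eval x ^ 2 * h3

/-- If at most `m` points of `A` lie on each side of `x`, and `A` has more than `m` points, then
the Cauchy-Schwarz bound for `∑ 1/(x - a)` holds with `m` in place of the cardinality of `A`. -/
lemma sq_sum_lt (A : Finset ℝ) (x : ℝ) (hx : x ∉ A) (m : ℕ)
    (hlt : (A.filter (· < x)).card ≤ m) (hgt : (A.filter (x < ·)).card ≤ m) (hm : m < A.card) :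
    (∑ a ∈ A, (x - a)⁻¹) ^ 2 < m * ∑ a ∈ A, (x - a)⁻¹ ^ 2 := by
  have hfil : A.filter (fun a => ¬ a < x) = A.filter (x < ·) := by
    refine Finset.filter_congr fun a ha => ?_
    have : x ≠ a := fun h => hx (h ▸ ha)
    rw [not_lt]
    exact ⟨fun h => lt_of_le_of_ne h this, le_of_lt⟩
  have hcard := Finset.card_filter_add_card_filter_not (s := A) (fun a => a < x)
  rw [hfil] at hcard
  rw [← Finset.sum_filter_add_sum_filter_not A (· < x) (fun a => (x - a)⁻¹),
    ← Finset.sum_filter_add_sum_filter_not A (· < x) (fun a => (x - a)⁻¹ ^ 2), hfil]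
  have hP : 0 < ∑ a ∈ A.filter (· < x), (x - a)⁻¹ := by
    refine Finset.sum_pos (fun a ha => ?_) (Finset.card_pos.mp (by omega))
    exact inv_pos.mpr (sub_pos.mpr (Finset.mem_filter.mp ha).2)
  have hN : ∑ a ∈ A.filter (x < ·), (x - a)⁻¹ < 0 := by
    refine Finset.sum_neg (fun a ha => ?_) (Finset.card_pos.mp (by omega))
    exact inv_lt_zero.mpr (sub_neg.mpr (Finset.mem_filter.mp ha).2)
  have cs : ∀ B : Finset ℝ, B.card ≤ m →
      (∑ a ∈ B, (x - a)⁻¹) ^ 2 ≤ m * ∑ a ∈ B, (x - a)⁻¹ ^ 2 := fun B hB =>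
    sq_sum_le_card_mul_sum_sq.trans (mul_le_mul_of_nonneg_right (by exact_mod_cast hB)
      (Finset.sum_nonneg fun _ _ => sq_nonneg _))
  have h1 := cs _ hlt
  have h2 := cs _ hgt
  nlinarith [mul_neg_of_pos_of_neg hP hN]

/-- Rolle's theorem as a count: if the finite set `T` contains all critical points of `p` in the
order-convex set `I`, then `p` has at most `T.card + 1` distinct zeros in `I`. -/
lemma card_roots_filter_le (p : ℝ[X]) (I : ℝ → Prop) [DecidablePred I]
    (hI : ∀ a b c, I a → I b → a < c → c < b → I c) (T : Finset ℝ)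
    (hT : ∀ c, I c → (derivative p).IsRoot c → c ∈ T) :
    (p.roots.toFinset.filter I).card ≤ T.card + 1 := by
  refine Finset.card_le_of_interleaved fun a ha b hb hab _ => ?_
  simp only [Finset.mem_filter, Multiset.mem_toFinset] at ha hb
  obtain ⟨c, hc, hc'⟩ := exists_deriv_eq_zero hab p.continuousOn
    (by rw [(isRoot_of_mem_roots ha.1).eq_zero, (isRoot_of_mem_roots hb.1).eq_zero])
  rw [Polynomial.deriv] at hc'
  exact ⟨c, hT c (hI a b c ha.2 hb.2 hc.1 hc.2) hc', hc⟩

theorem stmt14 (p : ℝ[X]) (n : ℕ) (hdeg : p.natDegree = n)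
    (hreal : Multiset.card p.roots = n)
    (hsimple : ∀ x : ℝ, p.IsRoot x → rootMultiplicity x p = 1)
    (ξ : ℕ → ℝ)
    (hmono : ∀ i j, 1 ≤ i → i < j → j ≤ n - 1 → ξ i < ξ j)
    (hroot : ∀ k, 1 ≤ k → k ≤ n - 1 → (derivative p).IsRoot (ξ k))
    (hall : ∀ x : ℝ, (derivative p).IsRoot x → ∃ k, 1 ≤ k ∧ k ≤ n - 1 ∧ x = ξ k)
    (s : ℕ) (hs1 : 2 ≤ s) (hs2 : s ≤ (n + 1) / 2)
    (x : ℝ)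
    (hx : x ∈ Set.Ioo (ξ (s - 1)) (ξ s) ∪ Set.Ioo (ξ (n - s)) (ξ (n - s + 1))) :
    p.eval x * (derivative (derivative p)).eval x <
      (((n : ℝ) - s) / ((n : ℝ) - s + 1)) * ((derivative p).eval x) ^ 2 := by
  have hsn : s + 1 ≤ n := by omega
  -- In both cases `x` lies between two consecutive critical points `ξ (k - 1)` and `ξ k`.
  obtain ⟨k, hk1, hkn, hk, hxl, hxr⟩ : ∃ k, 2 ≤ k ∧ k ≤ n - 1 ∧ (k = s ∨ k = n - s + 1) ∧
      ξ (k - 1) < x ∧ x < ξ k := by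
    rcases hx with hx | hx
    · exact ⟨s, hs1, by omega, Or.inl rfl, hx.1, hx.2⟩
    · exact ⟨n - s + 1, by omega, by omega, Or.inr rfl, hx.1, hx.2⟩
  have hle : ∀ j, 1 ≤ j → j ≤ k - 1 → ξ j < x := fun j h1 h2 => by
    rcases h2.lt_or_eq with h | rfl
    · exact (hmono j (k - 1) h1 h (by omega)).trans hxl
    · exact hxl
  have hge : ∀ j, k ≤ j → j ≤ n - 1 → x < ξ j := fun j h1 h2 => by
    rcases h1.lt_or_eq with h | rfl
    · exact hxr.trans (hmono k j (by omega) h h2)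
    · exact hxr
  have hcrit : (derivative p).eval x ≠ 0 := fun h => by
    obtain ⟨j, h1, h2, rfl⟩ := hall x h
    rcases le_or_gt k j with hj | hj
    · exact lt_irrefl _ (hge j hj h2)
    · exact lt_irrefl _ (hle j h1 (by omega))
  set A := p.roots.toFinset with hA
  have hnodup : p.roots.Nodup := by
    rw [Multiset.nodup_iff_count_le_one]
    intro a
    rw [count_roots]
    by_cases ha : p.IsRoot a
    · exact (hsimple a ha).le
    · simp [rootMultiplicity_eq_zero ha]
  have hAcard : A.card = n := by rw [hA, Multiset.toFinset_card_of_nodup hnodup, hreal]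
  have hfac : p = C p.leadingCoeff * ∏ a ∈ A, (X - C a) := by
    conv_lhs => rw [← C_leadingCoeff_mul_prod_multiset_X_sub_C (hreal.trans hdeg.symm)]
    rw [hA, Finset.prod, Multiset.toFinset_val, hnodup.dedup]
  have hlt : (A.filter (· < x)).card ≤ n - s + 1 := by
    refine (card_roots_filter_le p (· < x) (fun a b c _ hb _ hcb => hcb.trans hb)
      ((Finset.Icc 1 (k - 1)).image ξ) fun c hc hroot => ?_).trans
      ((Nat.add_le_add_right Finset.card_image_le 1).trans (by simp; omega))
    obtain ⟨j, h1, h2, rfl⟩ := hall c hroot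
    refine Finset.mem_image_of_mem _ (Finset.mem_Icc.mpr ⟨h1, ?_⟩)
    by_contra h
    exact lt_asymm hc (hge j (by omega) h2)
  have hgt : (A.filter (x < ·)).card ≤ n - s + 1 := by
    refine (card_roots_filter_le p (x < ·) (fun a b c ha _ hac _ => lt_trans ha hac)
      ((Finset.Icc k (n - 1)).image ξ) fun c hc hroot => ?_).trans
      ((Nat.add_le_add_right Finset.card_image_le 1).trans (by simp; omega))
    obtain ⟨j, h1, h2, rfl⟩ := hall c hroot
    refine Finset.mem_image_of_mem _ (Finset.mem_Icc.mpr ⟨?_, h2⟩)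
    by_contra h
    exact lt_asymm hc (hle j h1 (by omega))
  have hns : (1 : ℝ) ≤ n - s := by
    have : ((s + 1 : ℕ) : ℝ) ≤ n := by exact_mod_cast hsn
    push_cast at this
    linarith
  have hd2 : 0 < (derivative p).eval x ^ 2 := by positivity
  by_cases hpx : p.eval x = 0
  · rw [hpx, zero_mul]
    exact mul_pos (div_pos (by linarith) (by linarith)) hd2
  have hxA : x ∉ A := fun h => hpx (isRoot_of_mem_roots (Multiset.mem_toFinset.mp h))
  have hmain := sq_sum_lt A x hxA (n - s + 1) hlt hgt (by omega)
  have hcast : ((n - s + 1 : ℕ) : ℝ) = n - s + 1 := by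
    push_cast [Nat.cast_sub (show s ≤ n by omega)]
    ring
  rw [hcast] at hmain
  obtain ⟨h1, h2⟩ := eval_derivative_prod_X_sub_C A x hxA
  have e0 : p.eval x = p.leadingCoeff * (∏ a ∈ A, (X - C a)).eval x := by
    conv_lhs => rw [hfac]
    rw [eval_mul, eval_C]
  have e1 : (derivative p).eval x =
      p.leadingCoeff * (derivative (∏ a ∈ A, (X - C a))).eval x := by
    conv_lhs => rw [hfac]
    rw [derivative_C_mul, eval_mul, eval_C]
  have e2 : (derivative (derivative p)).eval x =
      p.leadingCoeff * (derivative (derivative (∏ a ∈ A, (X - C a)))).eval x := by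
    conv_lhs => rw [hfac]
    rw [derivative_C_mul, derivative_C_mul, eval_mul, eval_C]
  have f1 : (derivative p).eval x = p.eval x * ∑ a ∈ A, (x - a)⁻¹ := by
    rw [e0, e1, h1, mul_assoc]
  have f2 : p.eval x * (derivative (derivative p)).eval x =
      (derivative p).eval x ^ 2 - p.eval x ^ 2 * ∑ a ∈ A, (x - a)⁻¹ ^ 2 := by
    rw [e0, e1, e2]
    linear_combination p.leadingCoeff ^ 2 * h2
  have hpos : 0 < p.eval x ^ 2 := by positivity
  rw [f2, f1, div_mul_eq_mul_div, lt_div_iff₀ (by linarith)]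
  linarith [mul_lt_mul_of_pos_left hmain hpos]
end
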